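/- Let RG be a region graph with exactly three terminal vertices (n = 3) satisfying Assumption 1. Then RG is not feasible if and only if RG is terminal-separable and condition (C-IR) holds. -/

import Mathlib

namespace SumNetworksPaper

/-- `SuperReg Adj Θ R` : `R` belongs to the super region generated by `Θ`:
the smallest set containing `Θ` and containing every vertex whose parent set
is nonempty and entirely contained in the set. -/
inductive SuperReg {V : Type} (Adj : V → V → Prop) (Θ : Set V) : V → Prop
  | base {R : V} : R ∈ Θ → SuperReg Adj Θ R
  | step {R : V} : (∃ P, Adj P R) → (∀ P, Adj P R → SuperReg Adj Θ P) →
      SuperReg Adj Θ R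

/-- The super region `reg(Θ)` as a set. -/
def superReg {V : Type} (Adj : V → V → Prop) (Θ : Set V) : Set V :=
  {R | SuperReg Adj Θ R}

/-- A region graph: a finite directed acyclic simple graph with three source
vertices `S 0, S 1, S 2` (which have no parents) and `n` terminal vertices
`T 0, …, T (n-1)`, in which every non-source vertex has at least two parents.
`Adj P R` means that there is an edge from `P` to `R`, i.e. `P` is a parent of `R`. -/
structure RegionGraph (n : ℕ) where
  V : Type
  fintypeV : Fintype V
  Adj : V → V → Prop
  acyclic : ∀ v : V, ¬ Relation.TransGen Adj v v
  S : Fin 3 → V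
  T : Fin n → V
  S_inj : Function.Injective S
  T_inj : Function.Injective T
  source_no_parent : ∀ (i : Fin 3) (v : V), ¬ Adj v (S i)
  two_parents : ∀ v : V, (∀ i : Fin 3, v ≠ S i) →
    ∃ p q : V, p ≠ q ∧ Adj p v ∧ Adj q v

namespace RegionGraph

variable {n : ℕ} (G : RegionGraph n)

/-- The super region `reg(Θ)`. -/
def reg (Θ : Set G.V) : Set G.V := superReg G.Adj Θ

/-- `reg°(Θ) = reg(Θ) ∖ Θ`. -/
def regO (Θ : Set G.V) : Set G.V := G.reg Θ \ Θ

/-- `reg(S_i, S_j)`. -/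
def regPair (i j : Fin 3) : Set G.V := G.reg {G.S i, G.S j}

/-- `u → v` : there is a directed path from `u` to `v` (possibly trivial). -/
def Reaches (u v : G.V) : Prop := Relation.ReflTransGen G.Adj u v

/-- `Π = reg(S_1,S_2) ∪ reg(S_1,S_3) ∪ reg(S_2,S_3)`. -/
def bigPi : Set G.V := G.regPair 0 1 ∪ G.regPair 0 2 ∪ G.regPair 1 2

/-- `Ω_I` : vertices outside `Π` reaching exactly the terminals `T j`, `j ∈ I`. -/
def Omega (I : Set (Fin n)) : Set G.V :=
  {R | R ∉ G.bigPi ∧ ∀ j : Fin n, j ∈ I ↔ G.Reaches R (G.T j)}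

/-- `Λ_I` : vertices of `Π` having a child in `Ω_I`. -/
def Lambda (I : Set (Fin n)) : Set G.V :=
  {Q | Q ∈ G.bigPi ∧ ∃ R, G.Adj Q R ∧ R ∈ G.Omega I}

/-- Assumption 1: no terminal vertex lies in `Π`. -/
def Assumption1 : Prop := ∀ j : Fin n, G.T j ∉ G.bigPi

/-- Terminal-separability: `Ω_I = ∅` whenever `|I| > 1`. -/
def TerminalSeparable : Prop :=
  ∀ I : Set (Fin n), 1 < I.ncard → G.Omega I = ∅

/-- A linear code of the region graph over `F`. -/
def IsLinearCode (F : Type) [Field F] (d : G.V → Fin 3 → F) : Prop :=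
  (∀ i : Fin 3, d (G.S i) = Pi.single i 1) ∧
  ∀ v : G.V, (∀ i : Fin 3, v ≠ G.S i) →
    d v ∈ Submodule.span F (d '' {p | G.Adj p v})

/-- A linear solution: a linear code giving `ᾱ = (1,1,1)` at every terminal. -/
def IsLinearSolution (F : Type) [Field F] (d : G.V → Fin 3 → F) : Prop :=
  G.IsLinearCode F d ∧ ∀ j : Fin n, d (G.T j) = fun _ => 1

/-- Feasibility: existence of a linear solution over some finite field. -/
def Feasible : Prop :=
  ∃ (F : Type) (_ : Field F) (_ : Fintype F) (d : G.V → Fin 3 → F),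
    G.IsLinearSolution F d

/-- Conditions (1)–(3) on a family `{d_R : R ∈ Π}`. -/
def Conds123 (F : Type) [Field F] (d : G.V → Fin 3 → F) : Prop :=
  (∀ i : Fin 3, d (G.S i) = Pi.single i 1) ∧
  (∀ R ∈ G.bigPi, (∀ i : Fin 3, R ≠ G.S i) →
    d R ∈ Submodule.span F (d '' {p | G.Adj p R})) ∧
  ∀ j : Fin n, (fun _ => (1 : F)) ∈ Submodule.span F (d '' G.Lambda {j})

/-- `I` is a partition of `Π` into nonempty classes. -/
def IsPartitionOfPi (I : Set (Set G.V)) : Prop :=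
  (∀ Δ ∈ I, Δ.Nonempty ∧ Δ ⊆ G.bigPi) ∧
  ⋃₀ I = G.bigPi ∧
  ∀ Δ ∈ I, ∀ Δ' ∈ I, Δ ≠ Δ' → Δ ∩ Δ' = ∅

/-- The three sources lie in three distinct classes of the partition. -/
def SourcesSeparated (I : Set (Set G.V)) : Prop :=
  ∀ Δ ∈ I, ∀ i j : Fin 3, G.S i ∈ Δ → G.S j ∈ Δ → i = j

/-- `[S_i]_i = [S_i]_{i,j₁} ∪ [S_i]_{i,j₂}` for the class `Δ` of `S_i`. -/
def srcSub (i : Fin 3) (Δ : Set G.V) : Set G.V :=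
  Δ ∩ ⋃ (j : Fin 3) (_ : j ≠ i), G.regPair i j

/-- `X` is a subclass of the class `Δ`. -/
def IsSubclass (Δ X : Set G.V) : Prop :=
  (∃ i : Fin 3, G.S i ∈ Δ ∧
    (X = G.srcSub i Δ ∨
      ∃ j k : Fin 3, j ≠ k ∧ j ≠ i ∧ k ≠ i ∧ X = Δ ∩ G.regPair j k)) ∨
  ((∀ i : Fin 3, G.S i ∉ Δ) ∧ ∃ i j : Fin 3, i ≠ j ∧ X = Δ ∩ G.regPair i j)

/-- The two classes `Δ'`, `Δ''` are connected. -/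
def ClassesConnected (Δ' Δ'' : Set G.V) : Prop :=
  (∃ (j : Fin n) (X' X'' : Set G.V),
      G.IsSubclass Δ' X' ∧ G.IsSubclass Δ'' X'' ∧ G.Lambda {j} ⊆ X' ∪ X'') ∨
  ∃ i j : Fin 3, i ≠ j ∧
    (G.reg (Δ' ∩ G.regPair i j) ∩ G.reg (Δ'' ∩ G.regPair i j)).Nonempty

/-- The partition `I` of `Π` is compatible. -/
def Compatible (I : Set (Set G.V)) : Prop :=
  G.SourcesSeparated I ∧
  (∀ Δ' ∈ I, ∀ Δ'' ∈ I, Δ' ≠ Δ'' → ¬ G.ClassesConnected Δ' Δ'') ∧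
  ∀ (j : Fin n) (i₁ i₂ : Fin 3), i₁ ≠ i₂ →
    ∀ Δ₁ ∈ I, ∀ Δ₂ ∈ I, G.S i₁ ∈ Δ₁ → G.S i₂ ∈ Δ₂ →
      ¬ (G.Lambda {j} ⊆ G.srcSub i₁ Δ₁ ∪ G.srcSub i₂ Δ₂ ∪
          ⋃₀ {X : Set G.V | ∃ Δ ∈ I, (∀ i : Fin 3, G.S i ∉ Δ) ∧
                X = Δ ∩ G.regPair i₁ i₂})

/-- `I'` is obtained from `I` by merging two connected classes. -/
def IsContractionStep (I I' : Set (Set G.V)) : Prop :=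
  ∃ Δ' Δ'', Δ' ∈ I ∧ Δ'' ∈ I ∧ Δ' ≠ Δ'' ∧ G.ClassesConnected Δ' Δ'' ∧
    I' = insert (Δ' ∪ Δ'') (I \ {Δ', Δ''})

/-- The trivial partition of `Π` into singletons. -/
def trivialPartition : Set (Set G.V) := {X | ∃ R ∈ G.bigPi, X = {R}}

/-- `Ic` is a character partition of `Π`. -/
def IsCharacterPartition (Ic : Set (Set G.V)) : Prop :=
  ∃ (L : ℕ) (c : ℕ → Set (Set G.V)),
    c 0 = G.trivialPartition ∧ c L = Ic ∧
    (∀ ℓ < L, G.SourcesSeparated (c ℓ) ∧ G.IsContractionStep (c ℓ) (c (ℓ + 1))) ∧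
    ((∃ Δ ∈ Ic, ∃ i j : Fin 3, i ≠ j ∧ G.S i ∈ Δ ∧ G.S j ∈ Δ) ∨
      ∀ Δ' ∈ Ic, ∀ Δ'' ∈ Ic, Δ' ≠ Δ'' → ¬ G.ClassesConnected Δ' Δ'')

/-- Property (a): `d_{Q'} ∈ span{d_Q, ᾱ}` for all `Q, Q'` in the class `Δ`. -/
def PropertyA (F : Type) [Field F] (d : G.V → Fin 3 → F) (Δ : Set G.V) : Prop :=
  ∀ Q ∈ Δ, ∀ Q' ∈ Δ, d Q' ∈ Submodule.span F {d Q, fun _ => (1 : F)}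

end RegionGraph

/-- Condition (C-IR) for a region graph with three terminals. -/
def RegionGraph.CIR (G : RegionGraph 3) : Prop :=
  ∃ (σ τ : Equiv.Perm (Fin 3)) (P₁ P₂ : G.V),
    P₁ ∈ G.regO {G.S (σ 1), G.S (σ 2)} ∧
    P₂ ∈ G.regO {G.S (σ 0), G.S (σ 1)} ∧
    G.Lambda {τ 0} = {G.S (σ 0), P₁} ∧
    G.Lambda {τ 1} = {P₁, P₂} ∧
    G.Lambda {τ 2} ⊆ G.reg {G.S (σ 0), P₂} ∪ G.reg {G.S (σ 0), G.S (σ 2)}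

/-!
Combining vectors along paths shows that a solution exists as soon as some linear code of `Π`
recovers `ᾱ` from the boundary in `Π` of each root in a set of vertices outside `Π` that have no
common ancestors outside `Π` and together reach all terminals. Such a boundary is transversal: it is
contained in none of the three regions `reg(S_i, S_j)`. If separability fails, two terminals share a
root and there are at most two boundaries; otherwise the roots are the terminals and the boundaries
are the sets `Λ_j`.

A code that is constant and generic on each `reg°(S_i, S_j)` recovers `ᾱ` from every transversal
set except stars (a source `S_a` together with vertices between the other two sources) and vees
(vertices strictly inside the two regions through a source `S_b`). Suitable constants also serve
the stars at `S_a` and the vees at `S_b`, unless both occur with `a ≠ b`. In that conflict a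
degenerate code, or one of the form `e_i + κ(v) e_j` with `κ` injective, serves a third transversal
set as well, except when the three sets are those of (C-IR).

Conversely, under (C-IR) the set `Λ_1` forces two coordinates of `d_{P_1}` to agree, then `Λ_2`
forces a second coordinate of `d_{P_2}` to vanish, and the same coordinate vanishes on all of `Λ_3`.
-/

section LinearAlgebra

variable {ι F M : Type*} [Field F] [AddCommGroup M] [Module F M]

lemma mem_of_forall_eq_zero_or_single_mem [Finite ι] [DecidableEq ι] {W : Submodule F (ι → F)}
    {x : ι → F} (h : ∀ i, x i = 0 ∨ Pi.single i 1 ∈ W) : x ∈ W := by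
  have := Fintype.ofFinite ι
  rw [pi_eq_sum_univ' x]
  refine W.sum_mem fun i _ => ?_
  rcases h i with h | h
  · simp [h]
  · exact W.smul_mem _ (by convert h using 1)

lemma single_mem_of_mem [Finite ι] [DecidableEq ι] {W : Submodule F (ι → F)} {x : ι → F} {j : ι}
    (hx : x ∈ W) (hj : x j ≠ 0) (h : ∀ i ≠ j, x i = 0 ∨ Pi.single i 1 ∈ W) :
    Pi.single j 1 ∈ W := by
  have hrest : Function.update x j 0 ∈ W := by
    refine mem_of_forall_eq_zero_or_single_mem fun i => ?_
    by_cases hij : i = j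
    · exact Or.inl (by rw [hij, Function.update_self])
    · rw [Function.update_of_ne hij]
      exact h i hij
  have hsum : x j • Pi.single j 1 + Function.update x j 0 = x := by
    ext i
    by_cases hij : i = j
    · subst hij
      simp
    · simp [hij]
  exact (W.smul_mem_iff hj).1 ((W.add_mem_iff_left hrest).1 (hsum.symm ▸ hx))

lemma mem_of_add_smul_mem {W : Submodule F M} {u v : M} {x y : F} (hxy : x ≠ y)
    (hx : u + x • v ∈ W) (hy : u + y • v ∈ W) : u ∈ W ∧ v ∈ W := by
  have hv : v ∈ W := by
    refine (W.smul_mem_iff (sub_ne_zero.2 hxy)).1 ?_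
    rw [sub_smul, ← add_sub_add_left_eq_sub _ _ u]
    exact W.sub_mem hx hy
  exact ⟨(W.add_mem_iff_left (W.smul_mem x hv)).1 hx, hv⟩

end LinearAlgebra

lemma exists_injective_eqOn {V F : Type*} [Fintype V] [Fintype F]
    (hcard : Fintype.card V ≤ Fintype.card F) {s : Set V} {f₀ : V → F} (hf₀ : s.InjOn f₀) :
    ∃ f : V → F, f.Injective ∧ s.EqOn f f₀ := by
  classical
  have himage : (f₀ '' s).toFinset.card ≤ Fintype.card V := by
    rw [Set.toFinset_image]
    exact Finset.card_image_le.trans (Finset.card_le_univ _)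
  obtain ⟨t, hst, ht⟩ := Finset.exists_superset_card_eq himage hcard
  have hmaps : Set.MapsTo f₀ s t := fun v hv =>
    hst (Set.mem_toFinset.2 (Set.mem_image_of_mem f₀ hv))
  obtain ⟨g, hg⟩ := hmaps.exists_equiv_extend_of_card_eq ht.symm hf₀
  exact ⟨fun v => g v, Subtype.val_injective.comp g.injective, hg⟩

lemma exists_injective_eq_zero_eq {V F : Type*} [Fintype V] [Fintype F] [Zero F]
    (hcard : Fintype.card V ≤ Fintype.card F) {u v : V} (huv : u ≠ v) {x : F} (hx : x ≠ 0) :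
    ∃ f : V → F, f.Injective ∧ f u = 0 ∧ f v = x := by
  classical
  have hinj : Set.InjOn (Function.update (fun _ => (0 : F)) v x) {u, v} := by
    rw [Set.injOn_pair]
    simp [huv, hx.symm]
  obtain ⟨f, hf, heq⟩ := exists_injective_eqOn hcard hinj
  exact ⟨f, hf, by simpa [huv] using heq (Or.inl rfl), by simpa using heq (Or.inr rfl)⟩

lemma exists_injective_eq_zero_eq_eq {V F : Type*} [Fintype V] [Fintype F] [Zero F]
    (hcard : Fintype.card V ≤ Fintype.card F) {u v w : V} (huv : u ≠ v) (huw : u ≠ w)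
    (hvw : v ≠ w) {x y : F} (hx : x ≠ 0) (hy : y ≠ 0) (hxy : x ≠ y) :
    ∃ f : V → F, f.Injective ∧ f u = 0 ∧ f v = x ∧ f w = y := by
  classical
  have hinj : Set.InjOn (Function.update (Function.update (fun _ => (0 : F)) v x) w y)
      {u, v, w} := by
    rw [Set.injOn_insert (by simp [huv, huw]), Set.injOn_pair]
    simp [huv, huw, hvw, hx, hy, hxy]
  obtain ⟨f, hf, heq⟩ := exists_injective_eqOn hcard hinj
  refine ⟨f, hf, ?_, ?_, ?_⟩
  · simpa [huv, huw] using heq (x := u) (by simp)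
  · simpa [hvw] using heq (x := v) (by simp)
  · simpa using heq (x := w) (by simp)

lemma exists_finite_field (m : ℕ) :
    ∃ (F : Type) (_ : Field F) (_ : Fintype F), m ≤ Fintype.card F ∧ (2 : F) ≠ 0 := by
  obtain ⟨p, hp, hprime⟩ := Nat.exists_infinite_primes (m + 3)
  have : Fact p.Prime := ⟨hprime⟩
  refine ⟨ZMod p, inferInstance, inferInstance, by rw [ZMod.card]; omega, fun h => ?_⟩
  have hdvd : p ∣ 2 := (ZMod.natCast_eq_zero_iff 2 p).1 (by exact_mod_cast h)
  have := Nat.le_of_dvd two_pos hdvd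
  omega

lemma exists_ne_ne (i j : Fin 3) : ∃ k, k ≠ i ∧ k ≠ j := by
  decide +revert

lemma eq_or_eq_or_eq {a b c : Fin 3} (hab : a ≠ b) (hac : a ≠ c) (hbc : b ≠ c) (i : Fin 3) :
    i = a ∨ i = b ∨ i = c := by
  decide +revert

lemma exists_fun_eq {α : Type*} {a b c : Fin 3} (hab : a ≠ b) (hac : a ≠ c) (hbc : b ≠ c)
    (x y z : α) : ∃ f : Fin 3 → α, f a = x ∧ f b = y ∧ f c = z :=
  ⟨Function.update (Function.update (fun _ => x) b y) c z, by simp [hab, hac, hbc]⟩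

lemma exists_perm_eq {a b c : Fin 3} (hab : a ≠ b) (hac : a ≠ c) (hbc : b ≠ c) :
    ∃ σ : Equiv.Perm (Fin 3), σ 0 = a ∧ σ 1 = b ∧ σ 2 = c := by
  decide +revert

namespace RegionGraph

variable {n : ℕ} {G : RegionGraph n}

attribute [instance] fintypeV

/-- Vertex sets closed under taking parents. -/
def IsAncestral (G : RegionGraph n) (U : Set G.V) : Prop :=
  ∀ ⦃v⦄, v ∈ U → ∀ ⦃p⦄, G.Adj p v → p ∈ U

/-- The super region of the two sources other than `S k`; over all `k` these are the three super
regions whose union is `Π`. -/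
def side (G : RegionGraph n) (k : Fin 3) : Set G.V := G.reg (G.S '' {k}ᶜ)

/-- The non-source vertices of `side k`; for `{i, j, k} = {0, 1, 2}` this is `reg°(S_i, S_j)`. -/
def interior (G : RegionGraph n) (k : Fin 3) : Set G.V := G.side k \ Set.range G.S

section Reachability

variable {u v : G.V}

lemma wellFounded_adj (G : RegionGraph n) : WellFounded G.Adj := by
  have : Std.Irrefl (Relation.TransGen G.Adj) := ⟨G.acyclic⟩
  exact Subrelation.wf (fun h => Relation.TransGen.single h)
    (Finite.wellFounded_of_trans_of_irrefl (Relation.TransGen G.Adj))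

lemma Reaches.antisymm (huv : G.Reaches u v) (hvu : G.Reaches v u) : u = v := by
  rcases Relation.reflTransGen_iff_eq_or_transGen.1 huv with h | h
  · exact h.symm
  · exact (G.acyclic u (h.trans_left hvu)).elim

lemma IsAncestral.mem_of_reaches {U : Set G.V} (hU : G.IsAncestral U) (huv : G.Reaches u v)
    (hv : v ∈ U) : u ∈ U := by
  induction huv using Relation.ReflTransGen.head_induction_on with
  | refl => exact hv
  | head h _ ih => exact hU ih h

lemma IsAncestral.insert {U : Set G.V} (hU : G.IsAncestral U) (hv : {p | G.Adj p v} ⊆ U) :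
    G.IsAncestral (insert v U) := by
  rintro w (rfl | hw) p hp
  · exact Or.inr (hv hp)
  · exact Or.inr (hU hw hp)

lemma exists_minimal_notMem {U : Set G.V} {r : G.V} (hr : r ∉ U) :
    ∃ v ∉ U, G.Reaches v r ∧ {p | G.Adj p v} ⊆ U := by
  obtain ⟨v, ⟨hv, hvr⟩, hmin⟩ := G.wellFounded_adj.has_min {v | v ∉ U ∧ G.Reaches v r}
    ⟨r, hr, Relation.ReflTransGen.refl⟩
  exact ⟨v, hv, hvr, fun p hp => by_contra fun hpU => hmin p ⟨hpU, hvr.head hp⟩ hp⟩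

end Reachability

section SuperRegions

variable {Θ U : Set G.V} {i j k l : Fin 3} {v p : G.V}

lemma exists_adj_ne (hv : v ∉ Set.range G.S) (p : G.V) : ∃ q ≠ p, G.Adj q v := by
  obtain ⟨q, r, hqr, hq, hr⟩ := G.two_parents v fun i h => hv ⟨i, h.symm⟩
  by_cases hqp : q = p
  · exact ⟨r, hqp ▸ hqr.symm, hr⟩
  · exact ⟨q, hqp, hq⟩

lemma mem_reg_of_forall_adj (hv : v ∉ Set.range G.S) (h : ∀ p, G.Adj p v → p ∈ G.reg Θ) :
    v ∈ G.reg Θ :=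
  SuperReg.step ((exists_adj_ne hv v).imp fun _ => And.right) h

lemma subset_reg : Θ ⊆ G.reg Θ := fun _ => .base

lemma reg_subset (hΘ : Θ ⊆ U)
    (hU : ∀ v ∉ Set.range G.S, (∀ p, G.Adj p v → p ∈ U) → v ∈ U) : G.reg Θ ⊆ U := by
  intro v hv
  induction hv with
  | base h => exact hΘ h
  | step hne _ ih =>
    refine hU _ ?_ ih
    rintro ⟨i, rfl⟩
    exact hne.elim fun p hp => G.source_no_parent i p hp

lemma source_mem_reg : G.S i ∈ G.reg Θ ↔ G.S i ∈ Θ := by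
  refine ⟨fun h => ?_, fun h => subset_reg h⟩
  have : G.reg Θ ⊆ Θ ∪ (Set.range G.S)ᶜ :=
    reg_subset Set.subset_union_left fun v hv _ => Or.inr hv
  exact (this h).resolve_right fun h => h ⟨i, rfl⟩

lemma reg_eq_or_adj (hv : v ∈ G.reg Θ) : v ∈ Θ ∨ ∀ p, G.Adj p v → p ∈ G.reg Θ := by
  cases hv with
  | base h => exact Or.inl h
  | step _ h => exact Or.inr h

lemma source_mem_side : G.S i ∈ G.side k ↔ i ≠ k := by
  rw [side, source_mem_reg, G.S_inj.mem_set_image]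
  rfl

lemma isAncestral_side (k : Fin 3) : G.IsAncestral (G.side k) := by
  intro v hv p hp
  rcases reg_eq_or_adj hv with ⟨i, _, rfl⟩ | h
  · exact (G.source_no_parent i p hp).elim
  · exact h p hp

lemma side_eq_regPair (hij : i ≠ j) (hik : i ≠ k) (hjk : j ≠ k) : G.side k = G.regPair i j := by
  have : ({k}ᶜ : Set (Fin 3)) = {i, j} := by
    ext l
    simp only [Set.mem_compl_iff, Set.mem_singleton_iff, Set.mem_insert_iff]
    revert i j k l
    decide
  rw [side, regPair, this, Set.image_pair]

lemma interior_eq_regO (hij : i ≠ j) (hik : i ≠ k) (hjk : j ≠ k) :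
    G.interior k = G.regO {G.S i, G.S j} := by
  rw [regO, ← regPair, ← side_eq_regPair hij hik hjk]
  refine Set.Subset.antisymm (fun v hv => ⟨hv.1, ?_⟩) fun v hv => ⟨hv.1, ?_⟩
  · rintro (rfl | rfl) <;> exact hv.2 ⟨_, rfl⟩
  · rintro ⟨l, rfl⟩
    rcases eq_or_eq_or_eq hij hik hjk l with rfl | rfl | rfl
    · exact hv.2 (Or.inl rfl)
    · exact hv.2 (Or.inr rfl)
    · exact source_mem_side.1 hv.1 rfl

lemma mem_bigPi_iff : v ∈ G.bigPi ↔ ∃ k, v ∈ G.side k := by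
  have h₀ : G.side 0 = G.regPair 1 2 := side_eq_regPair (by decide) (by decide) (by decide)
  have h₁ : G.side 1 = G.regPair 0 2 := side_eq_regPair (by decide) (by decide) (by decide)
  have h₂ : G.side 2 = G.regPair 0 1 := side_eq_regPair (by decide) (by decide) (by decide)
  simp only [bigPi, Set.mem_union, Fin.exists_fin_succ, Fin.succ_zero_eq_one, Fin.succ_one_eq_two,
    IsEmpty.exists_iff, or_false, h₀, h₁, h₂]
  tauto

lemma isAncestral_bigPi (G : RegionGraph n) : G.IsAncestral G.bigPi := by
  intro v hv p hp
  obtain ⟨k, hk⟩ := mem_bigPi_iff.1 hv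
  exact mem_bigPi_iff.2 ⟨k, isAncestral_side k hk hp⟩

lemma source_mem_bigPi (i : Fin 3) : G.S i ∈ G.bigPi := by
  obtain ⟨k, hk, -⟩ := exists_ne_ne i i
  exact mem_bigPi_iff.2 ⟨k, source_mem_side.2 hk.symm⟩

lemma interior_subset_bigPi : G.interior k ⊆ G.bigPi := fun _ hv => mem_bigPi_iff.2 ⟨k, hv.1⟩

lemma mem_side_iff : v ∈ G.side k ↔ (∃ i ≠ k, v = G.S i) ∨ v ∈ G.interior k := by
  refine ⟨fun hv => ?_, ?_⟩
  · by_cases hS : v ∈ Set.range G.S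
    · obtain ⟨i, rfl⟩ := hS
      exact Or.inl ⟨i, source_mem_side.1 hv, rfl⟩
    · exact Or.inr ⟨hv, hS⟩
  · rintro (⟨i, hi, rfl⟩ | hv)
    exacts [source_mem_side.2 hi, hv.1]

lemma mem_bigPi_iff_source_or_interior :
    v ∈ G.bigPi ↔ v ∈ Set.range G.S ∨ ∃ k, v ∈ G.interior k := by
  constructor
  · intro hv
    obtain ⟨k, hk⟩ := mem_bigPi_iff.1 hv
    exact or_iff_not_imp_left.2 fun hS => ⟨k, hk, hS⟩
  · rintro (⟨i, rfl⟩ | ⟨k, hk⟩)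
    exacts [source_mem_bigPi i, interior_subset_bigPi hk]

lemma side_inter_side_subset (hkl : k ≠ l) : G.side k ∩ G.side l ⊆ Set.range G.S := by
  suffices G.side k ⊆ {v | v ∈ G.side k ∧ (v ∈ G.side l → v ∈ Set.range G.S)} from
    fun v hv => (this hv.1).2 hv.2
  refine reg_subset ?_ fun v hv hpar => ⟨mem_reg_of_forall_adj hv fun p hp => (hpar p hp).1, ?_⟩
  · rintro _ ⟨i, hi, rfl⟩
    exact ⟨source_mem_side.2 hi, fun _ => ⟨i, rfl⟩⟩
  intro hvl
  have hsource : ∀ p, G.Adj p v → ∃ i, i ≠ k ∧ i ≠ l ∧ G.S i = p := by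
    intro p hp
    have hpl := isAncestral_side l hvl hp
    obtain ⟨i, rfl⟩ := (hpar p hp).2 hpl
    exact ⟨i, source_mem_side.1 (hpar _ hp).1, source_mem_side.1 hpl, rfl⟩
  obtain ⟨p, -, hp⟩ := exists_adj_ne hv v
  obtain ⟨q, hqp, hq⟩ := exists_adj_ne hv p
  obtain ⟨i, hik, hil, rfl⟩ := hsource p hp
  obtain ⟨j, hjk, hjl, rfl⟩ := hsource q hq
  exact (hqp (congrArg G.S (by omega))).elim

lemma interior_inj (hk : v ∈ G.interior k) (hl : v ∈ G.interior l) : k = l :=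
  by_contra fun hkl => hk.2 (side_inter_side_subset hkl ⟨hk.1, hl.1⟩)

lemma adj_source_or_interior (hv : v ∈ G.interior k) (hp : G.Adj p v) :
    (∃ i ≠ k, p = G.S i) ∨ p ∈ G.interior k :=
  mem_side_iff.1 (isAncestral_side k hv.1 hp)

end SuperRegions

section Boundary

variable {U : Set G.V} {v r : G.V}

/-- The vertices of `U` with a child outside `U` that reaches `r`. -/
def boundary (G : RegionGraph n) (U : Set G.V) (r : G.V) : Set G.V :=
  {Q | Q ∈ U ∧ ∃ R, G.Adj Q R ∧ R ∉ U ∧ G.Reaches R r}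

/-- Subsets of `Π` contained in none of the three super regions `side k`. -/
def Transversal (G : RegionGraph n) (L : Set G.V) : Prop :=
  L ⊆ G.bigPi ∧ ∀ k, ¬ L ⊆ G.side k

lemma adj_mem_boundary (hv : v ∉ U) (hpar : {p | G.Adj p v} ⊆ U) (hvr : G.Reaches v r) :
    {p | G.Adj p v} ⊆ G.boundary U r :=
  fun _ hp => ⟨hpar hp, v, hp, hv, hvr⟩

lemma mem_boundary_insert (hU : G.IsAncestral U) (hv : v ∉ U) (hvr : G.Reaches v r)
    (hne : v ≠ r) : v ∈ G.boundary (insert v U) r := by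
  refine ⟨Or.inl rfl, ?_⟩
  rcases Relation.ReflTransGen.cases_head hvr with h | ⟨w, hvw, hwr⟩
  · exact (hne h).elim
  · refine ⟨w, hvw, ?_, hwr⟩
    rintro (rfl | hwU)
    exacts [G.acyclic w (.single hvw), hv (hU hwU hvw)]

lemma boundary_subset_union_insert :
    G.boundary U r ⊆ {p | G.Adj p v} ∪ (G.boundary (insert v U) r ∩ U) := by
  rintro Q ⟨hQ, R, hQR, hRU, hRr⟩
  by_cases hRv : R = v
  · exact Or.inl (hRv ▸ hQR)
  · exact Or.inr ⟨⟨Or.inr hQ, R, hQR, by simp [hRv, hRU], hRr⟩, hQ⟩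

lemma transversal_boundary (hr : r ∉ G.bigPi) : G.Transversal (G.boundary G.bigPi r) := by
  refine ⟨fun _ hQ => hQ.1, fun k hk => ?_⟩
  obtain ⟨v, hv, hvr, hpar⟩ := exists_minimal_notMem hr
  have hS : v ∉ Set.range G.S := by
    rintro ⟨i, rfl⟩
    exact hv (source_mem_bigPi i)
  exact hv (mem_bigPi_iff.2 ⟨k, mem_reg_of_forall_adj hS fun p hp =>
    hk (adj_mem_boundary hv hpar hvr hp)⟩)

end Boundary

section Codes

variable {F : Type} [Field F] {d e : G.V → Fin 3 → F} {U A : Set G.V} {α : Fin 3 → F} {r v : G.V}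

/-- The coding condition at one vertex: the vector at `v` is a combination of the vectors at the
parents of `v`. -/
def IsCodedAt (G : RegionGraph n) (d : G.V → Fin 3 → F) (v : G.V) : Prop :=
  d v ∈ Submodule.span F (d '' {p | G.Adj p v})

/-- Linear codes of the subgraph `Π`; the values outside `Π` are irrelevant. -/
def IsPiCode (G : RegionGraph n) (d : G.V → Fin 3 → F) : Prop :=
  (∀ i, d (G.S i) = Pi.single i 1) ∧ ∀ v ∈ G.bigPi, v ∉ Set.range G.S → G.IsCodedAt d v

/-- The code `d` recovers `ᾱ = 1` from the vectors carried by `L`. -/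
def Recovers (G : RegionGraph n) (d : G.V → Fin 3 → F) (L : Set G.V) : Prop :=
  (1 : Fin 3 → F) ∈ Submodule.span F (d '' L)

/-- A single code of `Π` recovers `ᾱ` from every member of the family `𝓛`. -/
def Solvable (G : RegionGraph n) (F : Type) [Field F] (𝓛 : Set (Set G.V)) : Prop :=
  ∃ d : G.V → Fin 3 → F, G.IsPiCode d ∧ ∀ L ∈ 𝓛, G.Recovers d L

lemma IsLinearCode.isCodedAt (hd : G.IsLinearCode F d) (hv : v ∉ Set.range G.S) :
    G.IsCodedAt d v :=
  hd.2 v fun i h => hv ⟨i, h.symm⟩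

lemma IsCodedAt.congr (hd : G.IsCodedAt d v) (hv : d v = e v)
    (hpar : Set.EqOn d e {p | G.Adj p v}) : G.IsCodedAt e v := by
  rw [IsCodedAt, ← hv, ← hpar.image_eq]
  exact hd

lemma isCodedAt_of_adj_eq {p : G.V} (hp : G.Adj p v) (h : d p = d v) : G.IsCodedAt d v :=
  Submodule.subset_span ⟨p, hp, h⟩

lemma apply_mem_span {L : Set G.V} (hv : v ∈ L) : d v ∈ Submodule.span F (d '' L) :=
  Submodule.subset_span (Set.mem_image_of_mem d hv)

lemma Solvable.mono {𝓛 𝓛' : Set (Set G.V)} (h : G.Solvable F 𝓛') (hsub : 𝓛 ⊆ 𝓛') :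
    G.Solvable F 𝓛 :=
  h.imp fun _ hd => ⟨hd.1, fun L hL => hd.2 L (hsub hL)⟩

lemma mem_span_boundary (hd : ∀ w ∉ U, G.Reaches w r → G.IsCodedAt d w) (hv : v ∉ U)
    (hvr : G.Reaches v r) : d v ∈ Submodule.span F (d '' G.boundary U r) := by
  induction v using G.wellFounded_adj.induction with
  | _ v ih =>
    refine Submodule.span_le.2 ?_ (hd v hv hvr)
    rintro _ ⟨p, hp, rfl⟩
    by_cases hpU : p ∈ U
    · exact apply_mem_span ⟨hpU, v, hp, hv, hvr⟩
    · exact ih p hp hpU (hvr.head hp)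

lemma apply_eq_zero_of_mem_span {X : Set G.V} {k : Fin 3} (h : ∀ v ∈ X, d v k = 0)
    {x : Fin 3 → F} (hx : x ∈ Submodule.span F (d '' X)) : x k = 0 := by
  suffices Submodule.span F (d '' X) ≤ LinearMap.ker (LinearMap.proj k) from this hx
  rw [Submodule.span_le]
  rintro _ ⟨v, hv, rfl⟩
  exact h v hv

lemma IsLinearCode.apply_eq_zero_of_mem_reg (hd : G.IsLinearCode F d) {Θ : Set G.V} {k : Fin 3}
    (hΘ : ∀ v ∈ Θ, d v k = 0) (hv : v ∈ G.reg Θ) : d v k = 0 := by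
  suffices G.reg Θ ⊆ {v | d v k = 0} from this hv
  exact reg_subset hΘ fun v hv hpar => apply_eq_zero_of_mem_span hpar (hd.isCodedAt hv)

lemma exists_extension_of_forall_adj (hU : G.IsAncestral U) (hr : r ∉ U)
    (hpar : {p | G.Adj p r} ⊆ U) (hα : α ∈ Submodule.span F (d '' G.boundary U r)) :
    ∃ e, U.EqOn e d ∧ (∀ v ∉ U, G.Reaches v r → G.IsCodedAt e v) ∧ e r = α := by
  classical
  have heq : ∀ v ∉ U, G.Reaches v r → v = r := by
    intro v hv hvr
    rcases Relation.ReflTransGen.cases_tail hvr with h | ⟨p, hvp, hp⟩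
    · exact h.symm
    · exact (hv (hU.mem_of_reaches hvp (hpar hp))).elim
  have hboundary : G.boundary U r ⊆ {p | G.Adj p r} :=
    fun Q ⟨_, R, hQR, hR, hRr⟩ => heq R hR hRr ▸ hQR
  have hEqOn : U.EqOn (Function.update d r α) d :=
    fun v hv => Function.update_of_ne (ne_of_mem_of_not_mem hv hr) _ _
  refine ⟨Function.update d r α, hEqOn, fun v hv hvr => ?_, Function.update_self ..⟩
  obtain rfl := heq v hv hvr
  rw [IsCodedAt, Function.update_self, (hEqOn.mono hpar).image_eq]
  exact Submodule.span_mono (Set.image_mono hboundary) hα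

/- Enlarge `U` one vertex `v` at a time: the part of `α` supplied by the parents of `v` is moved
onto `v`, which lies on the new boundary. -/
lemma exists_extension (hU : G.IsAncestral U) (hr : r ∉ U)
    (hα : α ∈ Submodule.span F (d '' G.boundary U r)) :
    ∃ e, U.EqOn e d ∧ (∀ v ∉ U, G.Reaches v r → G.IsCodedAt e v) ∧ e r = α := by
  classical
  induction U using WellFoundedGT.induction generalizing d with
  | _ U ih =>
    obtain ⟨v, hv, hvr, hpar⟩ := exists_minimal_notMem hr
    by_cases hne : v = r
    · exact exists_extension_of_forall_adj hU hr (hne ▸ hpar) hα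
    have hα' := Submodule.span_mono (Set.image_mono (boundary_subset_union_insert (v := v))) hα
    rw [Set.image_union, Submodule.span_union, Submodule.mem_sup] at hα'
    obtain ⟨x, hx, y, hy, rfl⟩ := hα'
    have hEqOn : U.EqOn (Function.update d v x) d :=
      fun w hw => Function.update_of_ne (ne_of_mem_of_not_mem hw hv) _ _
    have hxy : x + y ∈
        Submodule.span F (Function.update d v x '' G.boundary (insert v U) r) := by
      refine Submodule.add_mem _ (Submodule.subset_span
        ⟨v, mem_boundary_insert hU hv hvr hne, Function.update_self ..⟩) ?_
      rw [← (hEqOn.mono Set.inter_subset_right).image_eq] at hy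
      exact Submodule.span_mono (Set.image_mono Set.inter_subset_left) hy
    obtain ⟨e, heEqOn, hcoded, her⟩ := ih (insert v U) (Set.ssubset_insert hv) (hU.insert hpar)
      (fun h => h.elim (hne ·.symm) hr) hxy
    have heU : U.EqOn e d := (heEqOn.mono (Set.subset_insert v U)).trans hEqOn
    refine ⟨e, heU, fun w hw hwr => ?_, her⟩
    by_cases hwv : w = v
    · rw [hwv, IsCodedAt, heEqOn (Set.mem_insert v U), Function.update_self,
        (heU.mono hpar).image_eq]
      exact hx
    · exact hcoded w (fun h => h.elim hwv hw) hwr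

lemma exists_extension_to_ancestors (hU : G.IsAncestral U) (hA : Disjoint A U)
    (hancestor : ∀ v ∉ U, ∀ r ∈ A, ∀ s ∈ A, G.Reaches v r → G.Reaches v s → r = s)
    (hα : ∀ r ∈ A, α ∈ Submodule.span F (d '' G.boundary U r)) :
    ∃ e, U.EqOn e d ∧ ∀ r ∈ A, e r = α ∧ ∀ v ∉ U, G.Reaches v r → G.IsCodedAt e v := by
  classical
  have hAU : ∀ r ∈ A, r ∉ U := fun r hr => Set.disjoint_left.1 hA hr
  choose! e heU hcoded her using fun r hr => exists_extension hU (hAU r hr) (hα r hr)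
  let g : G.V → Fin 3 → F := fun v =>
    if h : v ∉ U ∧ ∃ r ∈ A, G.Reaches v r then e h.2.choose v else d v
  have hgU : U.EqOn g d := fun v hv => dif_neg fun h => h.1 hv
  have hg : ∀ r ∈ A, ∀ v, G.Reaches v r → g v = e r v := by
    intro r hr v hvr
    by_cases hv : v ∈ U
    · rw [hgU hv, heU r hr hv]
    have h : v ∉ U ∧ ∃ r ∈ A, G.Reaches v r := ⟨hv, r, hr, hvr⟩
    rw [show g v = e h.2.choose v from dif_pos h,
      hancestor v hv _ h.2.choose_spec.1 r hr h.2.choose_spec.2 hvr]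
  refine ⟨g, hgU, fun r hr => ⟨(hg r hr r .refl).trans (her r hr), fun v hv hvr => ?_⟩⟩
  exact (hcoded r hr v hv hvr).congr (hg r hr v hvr).symm fun p hp =>
    (hg r hr p (hvr.head hp)).symm

lemma exists_extension_to_descendants (hU : G.IsAncestral U) (hS : ∀ i, G.S i ∈ U)
    (hd : ∀ i, d (G.S i) = Pi.single i 1)
    (hcoded : ∀ v ∈ U, v ∉ Set.range G.S → G.IsCodedAt d v) (hAU : A ⊆ U)
    (hα : ∀ r ∈ A, ∀ v ∈ U, G.Reaches r v → d v = α) :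
    ∃ e, G.IsLinearCode F e ∧ ∀ r ∈ A, ∀ v, G.Reaches r v → e v = α := by
  classical
  let e : G.V → Fin 3 → F := fun v =>
    if v ∈ U then d v else if ∃ r ∈ A, G.Reaches r v then α else 0
  have heU : ∀ v ∈ U, e v = d v := fun v hv => if_pos hv
  have heα : ∀ r ∈ A, ∀ v, G.Reaches r v → e v = α := by
    intro r hr v hrv
    by_cases hv : v ∈ U
    · exact (heU v hv).trans (hα r hr v hv hrv)
    · exact (if_neg hv).trans (if_pos ⟨r, hr, hrv⟩)
  refine ⟨e, ⟨fun i => (heU _ (hS i)).trans (hd i), fun v hv => ?_⟩, heα⟩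
  by_cases hvU : v ∈ U
  · exact (hcoded v hvU fun ⟨i, hi⟩ => hv i hi.symm).congr (heU v hvU).symm
      fun p hp => (heU p (hU hvU hp)).symm
  by_cases hdesc : ∃ r ∈ A, G.Reaches r v
  · obtain ⟨r, hr, hrv⟩ := hdesc
    rcases Relation.ReflTransGen.cases_tail hrv with rfl | ⟨p, hrp, hp⟩
    · exact (hvU (hAU hr)).elim
    · exact isCodedAt_of_adj_eq hp ((heα r hr p hrp).trans (heα r hr v hrv).symm)
  · rw [show e v = 0 from (if_neg hvU).trans (if_neg hdesc)]
    exact Submodule.zero_mem _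

theorem feasible_of_roots [Finite F] (hA : Disjoint A G.bigPi)
    (hancestor : ∀ v ∉ G.bigPi, ∀ r ∈ A, ∀ s ∈ A, G.Reaches v r → G.Reaches v s → r = s)
    (hT : ∀ j, ∃ r ∈ A, G.Reaches r (G.T j)) (h : G.Solvable F (G.boundary G.bigPi '' A)) :
    G.Feasible := by
  obtain ⟨d, hd, hrec⟩ := h
  have hPi := G.isAncestral_bigPi
  obtain ⟨e, hePi, heA⟩ := exists_extension_to_ancestors hPi hA hancestor fun r hr =>
    hrec _ (Set.mem_image_of_mem _ hr)
  let U : Set G.V := G.bigPi ∪ {v | v ∉ G.bigPi ∧ ∃ r ∈ A, G.Reaches v r}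
  have hU : G.IsAncestral U := by
    rintro v (hv | ⟨-, r, hr, hvr⟩) p hp
    · exact Or.inl (hPi hv hp)
    · exact or_iff_not_imp_left.2 fun hpPi => ⟨hpPi, r, hr, hvr.head hp⟩
  have hcoded : ∀ v ∈ U, v ∉ Set.range G.S → G.IsCodedAt e v := by
    rintro v (hv | ⟨hv, r, hr, hvr⟩) hvS
    · exact (hd.2 v hv hvS).congr (hePi hv).symm fun p hp => (hePi (hPi hv hp)).symm
    · exact (heA r hr).2 v hv hvr
  have hAPi : ∀ r ∈ A, r ∉ G.bigPi := fun r hr => Set.disjoint_left.1 hA hr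
  have hone : ∀ r ∈ A, ∀ v ∈ U, G.Reaches r v → e v = 1 := by
    rintro r hr v (hv | ⟨-, s, hs, hvs⟩) hrv
    · exact (hAPi r hr (hPi.mem_of_reaches hrv hv)).elim
    · obtain rfl := hancestor r (hAPi r hr) r hr s hs .refl (hrv.trans hvs)
      exact hrv.antisymm hvs ▸ (heA r hr).1
  obtain ⟨g, hg, hgA⟩ := exists_extension_to_descendants hU (fun i => Or.inl (source_mem_bigPi i))
    (fun i => (hePi (source_mem_bigPi i)).trans (hd.1 i)) hcoded
    (fun r hr => Or.inr ⟨hAPi r hr, r, hr, .refl⟩) hone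
  refine ⟨F, inferInstance, Fintype.ofFinite F, g, hg, fun j => ?_⟩
  obtain ⟨r, hr, hrj⟩ := hT j
  exact hgA r hr _ hrj

end Codes

section SideCodes

variable {F : Type} [Field F] {g : G.V → Fin 3 → F} {a b c i j k : Fin 3} {v : G.V}

local notation "𝐞" i:max => (Pi.single i (1 : F) : Fin 3 → F)

/-- The assignment that agrees with `g` except that each source carries its basis vector. -/
noncomputable def withSources (G : RegionGraph n) (g : G.V → Fin 3 → F) : G.V → Fin 3 → F :=
  Function.extend G.S (fun i => 𝐞 i) g

/-- The coding conditions inside `side k`; what `g` assigns to the sources is irrelevant. -/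
def IsSideCode (G : RegionGraph n) (k : Fin 3) (g : G.V → Fin 3 → F) : Prop :=
  ∀ v ∈ G.interior k, G.IsCodedAt (G.withSources g) v

lemma withSources_source (g : G.V → Fin 3 → F) (i : Fin 3) : G.withSources g (G.S i) = 𝐞 i :=
  G.S_inj.extend_apply _ _ i

lemma withSources_of_notMem_range (g : G.V → Fin 3 → F) (hv : v ∉ Set.range G.S) :
    G.withSources g v = g v :=
  Function.extend_apply' _ _ _ hv

lemma exists_isPiCode {g : Fin 3 → G.V → Fin 3 → F} (hg : ∀ k, G.IsSideCode k (g k)) :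
    ∃ d, G.IsPiCode d ∧ ∀ k, ∀ v ∈ G.interior k, d v = g k v := by
  classical
  let d := G.withSources fun v => if h : ∃ k, v ∈ G.interior k then g h.choose v else 0
  have hd : ∀ k, ∀ v ∈ G.interior k, d v = g k v := by
    intro k v hv
    have h : ∃ k, v ∈ G.interior k := ⟨k, hv⟩
    rw [show d v = _ from withSources_of_notMem_range _ hv.2, dif_pos h,
      interior_inj h.choose_spec hv]
  refine ⟨d, ⟨withSources_source _, fun v hv hvS => ?_⟩, hd⟩
  obtain ⟨k, hk⟩ := (mem_bigPi_iff_source_or_interior.1 hv).resolve_left hvS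
  refine (hg k v hk).congr ?_ fun p hp => ?_
  · rw [hd k v hk, withSources_of_notMem_range _ hvS]
  · rcases adj_source_or_interior hk hp with ⟨i, -, rfl⟩ | hpk
    · exact (withSources_source _ i).trans (withSources_source _ i).symm
    · rw [hd k p hpk, withSources_of_notMem_range _ hpk.2]

lemma exists_isPiCode_of_ne {gₐ gᵦ gᵧ : G.V → Fin 3 → F} (hab : a ≠ b) (hac : a ≠ c) (hbc : b ≠ c)
    (hₐ : G.IsSideCode a gₐ) (hᵦ : G.IsSideCode b gᵦ) (hᵧ : G.IsSideCode c gᵧ) :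
    ∃ d, G.IsPiCode d ∧ (∀ v ∈ G.interior a, d v = gₐ v) ∧ (∀ v ∈ G.interior b, d v = gᵦ v) ∧
      ∀ v ∈ G.interior c, d v = gᵧ v := by
  obtain ⟨g, rfl, rfl, rfl⟩ := exists_fun_eq hab hac hbc gₐ gᵦ gᵧ
  have hg : ∀ k, G.IsSideCode k (g k) := fun k => by
    rcases eq_or_eq_or_eq hab hac hbc k with rfl | rfl | rfl <;> assumption
  obtain ⟨d, hd, hdg⟩ := exists_isPiCode hg
  exact ⟨d, hd, hdg a, hdg b, hdg c⟩

lemma isSideCode_const {w : Fin 3 → F} (hw : w k = 0) : G.IsSideCode k fun _ => w := by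
  intro v hv
  by_cases h : ∃ p ∈ G.interior k, G.Adj p v
  · obtain ⟨p, hpk, hp⟩ := h
    refine isCodedAt_of_adj_eq hp ?_
    rw [withSources_of_notMem_range _ hpk.2, withSources_of_notMem_range _ hv.2]
  have hsource : ∀ p, G.Adj p v → ∃ i ≠ k, p = G.S i := fun p hp =>
    (adj_source_or_interior hv hp).resolve_right fun hpk => h ⟨p, hpk, hp⟩
  obtain ⟨p, -, hp⟩ := exists_adj_ne hv.2 v
  obtain ⟨q, hqp, hq⟩ := exists_adj_ne hv.2 p
  obtain ⟨i, hik, rfl⟩ := hsource p hp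
  obtain ⟨j, hjk, rfl⟩ := hsource q hq
  have hij : i ≠ j := fun h => hqp (h ▸ rfl)
  rw [IsCodedAt, withSources_of_notMem_range _ hv.2]
  refine mem_of_forall_eq_zero_or_single_mem fun l => ?_
  rcases eq_or_eq_or_eq hij hik hjk l with rfl | rfl | rfl
  · exact Or.inr (Submodule.subset_span ⟨_, hp, withSources_source _ l⟩)
  · exact Or.inr (Submodule.subset_span ⟨_, hq, withSources_source _ l⟩)
  · exact Or.inl hw

lemma isSideCode_slope (hij : i ≠ j) (hik : i ≠ k) (hjk : j ≠ k) {f : G.V → F}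
    (hf : f (G.S i) = 0)
    (h : ∀ v ∈ G.interior k, (∃ p, G.Adj p v ∧ p ≠ G.S j ∧ f p = f v) ∨
      ∃ p q, G.Adj p v ∧ G.Adj q v ∧ p ≠ G.S j ∧ (q ≠ G.S j → f p ≠ f q)) :
    G.IsSideCode k fun v => 𝐞 i + f v • 𝐞 j := by
  intro v hv
  have hadj : ∀ p, G.Adj p v → p ≠ G.S j →
      G.withSources (fun v => 𝐞 i + f v • 𝐞 j) p = 𝐞 i + f p • 𝐞 j := by
    intro p hp hpj
    rcases adj_source_or_interior hv hp with ⟨l, hlk, rfl⟩ | hpk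
    · obtain rfl : i = l := by
        have : l ≠ j := fun h => hpj (h ▸ rfl)
        omega
      rw [withSources_source, hf, zero_smul, add_zero]
    · exact withSources_of_notMem_range _ hpk.2
  rcases h v hv with ⟨p, hp, hpj, hpv⟩ | ⟨p, q, hp, hq, hpj, hpq⟩
  · refine isCodedAt_of_adj_eq hp ?_
    rw [hadj p hp hpj, withSources_of_notMem_range _ hv.2, hpv]
  rw [IsCodedAt, withSources_of_notMem_range _ hv.2]
  set W := Submodule.span F (G.withSources (fun v => 𝐞 i + f v • 𝐞 j) '' {p | G.Adj p v})
  have hpW : 𝐞 i + f p • 𝐞 j ∈ W := Submodule.subset_span ⟨p, hp, hadj p hp hpj⟩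
  by_cases hqj : q = G.S j
  · have hjW : 𝐞 j ∈ W := Submodule.subset_span ⟨q, hq, hqj ▸ withSources_source _ j⟩
    exact W.add_mem ((W.add_mem_iff_left (W.smul_mem _ hjW)).1 hpW) (W.smul_mem _ hjW)
  · obtain ⟨hiW, hjW⟩ := mem_of_add_smul_mem (hpq hqj) hpW
      (Submodule.subset_span ⟨q, hq, hadj q hq hqj⟩)
    exact W.add_mem hiW (W.smul_mem _ hjW)

lemma isSideCode_slope_of_injective (hij : i ≠ j) (hik : i ≠ k) (hjk : j ≠ k) {f : G.V → F}
    (hf : f (G.S i) = 0) (hinj : f.Injective) : G.IsSideCode k fun v => 𝐞 i + f v • 𝐞 j := by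
  refine isSideCode_slope hij hik hjk hf fun v hv => Or.inr ?_
  obtain ⟨p, hpj, hp⟩ := exists_adj_ne hv.2 (G.S j)
  obtain ⟨q, hqp, hq⟩ := exists_adj_ne hv.2 p
  exact ⟨p, q, hp, hq, hpj, fun _ => hinj.ne hqp.symm⟩

open Classical in
lemma isSideCode_slope_collapsed (hij : i ≠ j) (hik : i ≠ k) (hjk : j ≠ k) {Q : G.V}
    (hQ : Q ∈ G.interior k) {f : G.V → F} (hf : f (G.S i) = 0) (hinj : f.Injective) :
    G.IsSideCode k fun v => 𝐞 i + (if v ∈ G.reg {G.S i, Q} then 0 else f v) • 𝐞 j := by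
  set C := G.reg {G.S i, Q}
  have hiC : G.S i ∈ C := subset_reg (Or.inl rfl)
  have hjC : G.S j ∉ C := fun h =>
    (source_mem_reg.1 h).elim (fun h => hij (G.S_inj h).symm) fun h => hQ.2 ⟨j, h⟩
  refine isSideCode_slope hij hik hjk (if_pos hiC) fun v hv => ?_
  by_cases hpar : ∀ p, G.Adj p v → p ∈ C
  · obtain ⟨p, -, hp⟩ := exists_adj_ne hv.2 v
    refine Or.inl ⟨p, hp, fun h => hjC (h ▸ hpar p hp), ?_⟩
    rw [if_pos (hpar p hp), if_pos (mem_reg_of_forall_adj hv.2 hpar)]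
  · push Not at hpar
    obtain ⟨q, hq, hqC⟩ := hpar
    obtain ⟨p, hpq, hp⟩ := exists_adj_ne hv.2 q
    have hne : (if p ∈ C then 0 else f p) ≠ if q ∈ C then 0 else f q := by
      rw [if_neg hqC]
      split_ifs with hpC
      · exact hf ▸ hinj.ne (ne_of_mem_of_not_mem hiC hqC)
      · exact hinj.ne hpq
    by_cases hpj : p = G.S j
    · exact Or.inr ⟨q, p, hq, hp, hpj ▸ hpq.symm, fun h => (h hpj).elim⟩
    · exact Or.inr ⟨p, q, hp, hq, hpj, fun _ => hne⟩

end SideCodes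

section Transversals

variable {L : Set G.V} {a b k : Fin 3}

/-- Sets consisting of the source `S a` and vertices between the other two sources. -/
def Star (G : RegionGraph n) (a : Fin 3) (L : Set G.V) : Prop :=
  G.S a ∈ L ∧ L ⊆ insert (G.S a) (G.interior a)

/-- Sets of interior vertices that avoid `side b`, so that they lie on the two sides through
`S b`. -/
def Vee (G : RegionGraph n) (b : Fin 3) (L : Set G.V) : Prop :=
  ∀ v ∈ L, ∃ k ≠ b, v ∈ G.interior k

lemma Vee.source_notMem (hL : G.Vee b L) : G.S a ∉ L := fun ha =>
  let ⟨_, _, hk⟩ := hL _ ha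
  hk.2 ⟨a, rfl⟩

lemma Transversal.exists_mem_notMem_side (hL : G.Transversal L) (k : Fin 3) :
    ∃ v ∈ L, v ∉ G.side k ∧ (v = G.S k ∨ ∃ l ≠ k, v ∈ G.interior l) := by
  obtain ⟨v, hv, hvk⟩ := Set.not_subset.1 (hL.2 k)
  refine ⟨v, hv, hvk, ?_⟩
  rcases mem_bigPi_iff_source_or_interior.1 (hL.1 hv) with ⟨i, rfl⟩ | ⟨l, hl⟩
  · exact Or.inl (congrArg _ (not_ne_iff.1 (mt source_mem_side.2 hvk)))
  · exact Or.inr ⟨l, fun h => hvk (h ▸ hl.1), hl⟩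

lemma Transversal.inter_interior_nonempty_of_star (hL : G.Transversal L) (h : G.Star a L) :
    (L ∩ G.interior a).Nonempty := by
  obtain ⟨k, hka, -⟩ := exists_ne_ne a a
  obtain ⟨v, hv, hvk, -⟩ := hL.exists_mem_notMem_side k
  rcases h.2 hv with rfl | hva
  · exact (hvk (source_mem_side.2 hka.symm)).elim
  · exact ⟨v, hv, hva⟩

lemma Transversal.inter_interior_nonempty_of_vee (hL : G.Transversal L) (h : G.Vee b L)
    (hk : k ≠ b) : (L ∩ G.interior k).Nonempty := by
  obtain ⟨l, hlb, hlk⟩ := exists_ne_ne b k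
  obtain ⟨v, hv, hvl, -⟩ := hL.exists_mem_notMem_side l
  obtain ⟨m, hmb, hm⟩ := h v hv
  have hml : m ≠ l := fun h => hvl (h ▸ hm.1)
  obtain rfl : m = k := by omega
  exact ⟨v, hv, hm⟩

lemma Transversal.inter_interior_nonempty_of_subset (hL : G.Transversal L)
    (h : L ⊆ G.side b ∪ G.interior k) : (L ∩ G.interior k).Nonempty := by
  obtain ⟨v, hv, hvb⟩ := Set.not_subset.1 (hL.2 b)
  exact ⟨v, hv, (h hv).resolve_left hvb⟩

lemma Transversal.exists_source_or_mem_interior (hL : G.Transversal L)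
    (h : L ⊆ G.side b ∪ G.interior k) : ∃ v ∈ L, v = G.S k ∨ v ∈ G.interior b := by
  obtain ⟨v, hv, hvk, hv'⟩ := hL.exists_mem_notMem_side k
  have hvb : v ∈ G.side b := (h hv).resolve_right fun h => hvk h.1
  exact ⟨v, hv, hv'.imp_right fun ⟨_, _, hl⟩ => ⟨hvb, hl.2⟩⟩

end Transversals

section ConstantCodes

variable {F : Type} [Field F] {d : G.V → Fin 3 → F} {𝓛 : Set (Set G.V)} {L : Set G.V}
  {a b c i j : Fin 3}

local notation "𝐞" i:max => (Pi.single i (1 : F) : Fin 3 → F)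

lemma one_eq_add_add (hab : a ≠ b) (hac : a ≠ c) (hbc : b ≠ c) :
    (1 : Fin 3 → F) = 𝐞 a + 𝐞 b + 𝐞 c := by
  ext i
  rcases eq_or_eq_or_eq hab hac hbc i with rfl | rfl | rfl <;> simp [*, Ne.symm]

/-- Codes of `Π` whose vectors have no zero coordinates beyond the forced ones. -/
def IsGeneric (G : RegionGraph n) (d : G.V → Fin 3 → F) : Prop :=
  ∀ v ∈ G.bigPi, ∀ i, d v i = 0 ↔ v ∈ G.side i

lemma Transversal.recovers_of_single_mem (hL : G.Transversal L) (hd : G.IsGeneric d)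
    (hij : i ≠ j) (hi : 𝐞 i ∈ Submodule.span F (d '' L)) (hj : 𝐞 j ∈ Submodule.span F (d '' L)) :
    G.Recovers d L := by
  obtain ⟨k, hki, hkj⟩ := exists_ne_ne i j
  obtain ⟨v, hv, hvk, -⟩ := hL.exists_mem_notMem_side k
  have hk : 𝐞 k ∈ Submodule.span F (d '' L) := by
    refine single_mem_of_mem (apply_mem_span hv) (mt (hd v (hL.1 hv) k).1 hvk) fun l hl => ?_
    obtain rfl | rfl : l = i ∨ l = j := by omega
    exacts [Or.inr hi, Or.inr hj]
  rw [Recovers, one_eq_add_add hij hki.symm hkj.symm]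
  exact Submodule.add_mem _ (Submodule.add_mem _ hi hj) hk

lemma Transversal.recovers_of_source_mem (hL : G.Transversal L) (hd : G.IsGeneric d)
    (ha : 𝐞 a ∈ Submodule.span F (d '' L)) (hstar : ¬ L ⊆ insert (G.S a) (G.interior a)) :
    G.Recovers d L := by
  obtain ⟨v, hv, hva⟩ := Set.not_subset.1 hstar
  have hvPi := hL.1 hv
  obtain ⟨i, j, hij, hia, hja, hvi, hvj⟩ :
      ∃ i j, i ≠ j ∧ i ≠ a ∧ j ≠ a ∧ v ∉ G.side i ∧ v ∈ G.side j := by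
    rcases mem_bigPi_iff_source_or_interior.1 hvPi with ⟨i, rfl⟩ | ⟨j, hj⟩
    · have hia : i ≠ a := fun h => hva (Or.inl (h ▸ rfl))
      obtain ⟨j, hji, hja⟩ := exists_ne_ne i a
      exact ⟨i, j, hji.symm, hia, hja, fun h => source_mem_side.1 h rfl,
        source_mem_side.2 hji.symm⟩
    · have hja : j ≠ a := fun h => hva (Or.inr (h ▸ hj))
      obtain ⟨i, hij, hia⟩ := exists_ne_ne j a
      exact ⟨i, j, hij, hia, hja, fun h => hj.2 (side_inter_side_subset hij ⟨h, hj.1⟩), hj.1⟩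
  have hi : 𝐞 i ∈ Submodule.span F (d '' L) := by
    refine single_mem_of_mem (apply_mem_span hv) (mt (hd v hvPi i).1 hvi) fun l hl => ?_
    obtain rfl | rfl : l = a ∨ l = j := by omega
    exacts [Or.inr ha, Or.inl ((hd v hvPi l).2 hvj)]
  exact hL.recovers_of_single_mem hd hia.symm ha hi

section Weights

variable {w : Fin 3 → Fin 3 → F}

lemma isGeneric_of_weights (hd : G.IsPiCode d) (hdw : ∀ k, ∀ v ∈ G.interior k, d v = w k)
    (hw : ∀ k i, w k i = 0 ↔ i = k) : G.IsGeneric d := by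
  intro v hv i
  rcases mem_bigPi_iff_source_or_interior.1 hv with ⟨j, rfl⟩ | ⟨k, hk⟩
  · rw [hd.1, source_mem_side, Pi.single_apply]
    simp [eq_comm]
  · rw [hdw k v hk, hw]
    refine ⟨fun h => h ▸ hk.1, fun hi => by_contra fun hik => ?_⟩
    exact hk.2 (side_inter_side_subset hik ⟨hi, hk.1⟩)

lemma Transversal.recovers_of_weights (hL : G.Transversal L) (hd : G.IsPiCode d)
    (hdw : ∀ k, ∀ v ∈ G.interior k, d v = w k) (hw : ∀ k i, w k i = 0 ↔ i = k)
    (hrange : 1 ∈ Submodule.span F (Set.range w))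
    (hstar : ∀ a, G.Star a L → 1 ∈ Submodule.span F {𝐞 a, w a})
    (hvee : ∀ b, G.Vee b L → 1 ∈ Submodule.span F (w '' {b}ᶜ)) : G.Recovers d L := by
  have hwL : ∀ k, (L ∩ G.interior k).Nonempty → w k ∈ d '' L :=
    fun k ⟨v, hv, hvk⟩ => ⟨v, hv, hdw k v hvk⟩
  by_cases hS : ∃ a, G.S a ∈ L
  · obtain ⟨a, ha⟩ := hS
    by_cases hsub : L ⊆ insert (G.S a) (G.interior a)
    · refine Submodule.span_mono ?_ (hstar a ⟨ha, hsub⟩)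
      rintro _ (rfl | rfl)
      exacts [⟨G.S a, ha, hd.1 a⟩, hwL a (hL.inter_interior_nonempty_of_star ⟨ha, hsub⟩)]
    · exact hL.recovers_of_source_mem (isGeneric_of_weights hd hdw hw)
        (hd.1 a ▸ apply_mem_span ha) hsub
  by_cases hall : ∀ k, (L ∩ G.interior k).Nonempty
  · exact Submodule.span_mono (Set.range_subset_iff.2 fun k => hwL k (hall k)) hrange
  push Not at hall
  obtain ⟨b, hb⟩ := hall
  have hveeL : G.Vee b L := by
    intro v hv
    obtain ⟨k, hk⟩ := (mem_bigPi_iff_source_or_interior.1 (hL.1 hv)).resolve_left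
      fun ⟨a, ha⟩ => hS ⟨a, ha ▸ hv⟩
    exact ⟨k, fun h => Set.eq_empty_iff_forall_notMem.1 hb v ⟨hv, h ▸ hk⟩, hk⟩
  refine Submodule.span_mono ?_ (hvee b hveeL)
  rintro _ ⟨k, hk, rfl⟩
  exact hwL k (hL.inter_interior_nonempty_of_vee hveeL hk)

lemma solvable_of_weights (hw : ∀ k i, w k i = 0 ↔ i = k) (h𝓛 : ∀ L ∈ 𝓛, G.Transversal L)
    (hrange : 1 ∈ Submodule.span F (Set.range w))
    (hstar : ∀ L ∈ 𝓛, ∀ a, G.Star a L → 1 ∈ Submodule.span F {𝐞 a, w a})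
    (hvee : ∀ L ∈ 𝓛, ∀ b, G.Vee b L → 1 ∈ Submodule.span F (w '' {b}ᶜ)) : G.Solvable F 𝓛 := by
  obtain ⟨d, hd, hdw⟩ := exists_isPiCode (G := G) (g := fun k _ => w k) fun k =>
    isSideCode_const ((hw k k).2 rfl)
  exact ⟨d, hd, fun L hL => (h𝓛 L hL).recovers_of_weights hd hdw hw hrange (hstar L hL) (hvee L hL)⟩

end Weights

lemma solvable_of_forall_not_vee (h2 : (2 : F) ≠ 0) (h𝓛 : ∀ L ∈ 𝓛, G.Transversal L)
    (hvee : ∀ L ∈ 𝓛, ∀ b, ¬ G.Vee b L) : G.Solvable F 𝓛 := by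
  let w : Fin 3 → Fin 3 → F := fun k => 1 - 𝐞 k
  refine solvable_of_weights (w := w) (fun k i => ?_) h𝓛 ?_ (fun _ _ a _ => ?_)
    fun L hL b hb => (hvee L hL b hb).elim
  · by_cases h : i = k <;> simp [w, h]
  · have hsum : (2 : F) • (1 : Fin 3 → F) = ∑ k, w k := by
      ext i
      simp only [w, Finset.sum_sub_distrib, Finset.sum_apply, Pi.sub_apply, Pi.smul_apply,
        Pi.one_apply, Finset.sum_pi_single, Finset.sum_const, Finset.card_univ, Fintype.card_fin]
      norm_num
    rw [← Submodule.smul_mem_iff _ h2, hsum]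
    exact Submodule.sum_mem _ fun k _ => Submodule.subset_span ⟨k, rfl⟩
  · exact Submodule.mem_span_pair.2 ⟨1, 1, by simp [w]⟩

lemma solvable_of_forall_not_star (h2 : (2 : F) ≠ 0) (h𝓛 : ∀ L ∈ 𝓛, G.Transversal L)
    (hstar : ∀ L ∈ 𝓛, ∀ a, ¬ G.Star a L) : G.Solvable F 𝓛 := by
  let w : Fin 3 → Fin 3 → F := ![![0, 2, 1], ![2, 0, 1], ![1, -1, 0]]
  have hpair : ∀ b, 1 ∈ Submodule.span F (w '' {b}ᶜ) := by
    have hone : (1 : Fin 3 → F) = ![1, 1, 1] := by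
      ext i
      fin_cases i <;> rfl
    have htwo : (2 : F) + -1 = 1 := by norm_num
    have hhalf : (2 : F)⁻¹ + 2⁻¹ = 1 := by rw [← two_mul, mul_inv_cancel₀ h2]
    suffices ∀ b, ∃ i ≠ b, ∃ j ≠ b, ∃ x y : F, x • w i + y • w j = 1 by
      intro b
      obtain ⟨i, hi, j, hj, x, y, hxy⟩ := this b
      rw [← hxy]
      exact Submodule.add_mem _ (Submodule.smul_mem _ x (Submodule.subset_span ⟨i, hi, rfl⟩))
        (Submodule.smul_mem _ y (Submodule.subset_span ⟨j, hj, rfl⟩))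
    intro b
    fin_cases b
    · exact ⟨1, by decide, 2, by decide, 1, -1, by simp [w, hone, htwo]⟩
    · exact ⟨0, by decide, 2, by decide, 1, 1, by simp [w, hone, htwo]⟩
    · exact ⟨0, by decide, 1, by decide, 2⁻¹, 2⁻¹, by simp [w, hone, h2, hhalf]⟩
  refine solvable_of_weights (w := w) (fun k i => ?_) h𝓛
    (Submodule.span_mono (Set.image_subset_range _ _) (hpair 0))
    (fun L hL a ha => (hstar L hL a ha).elim) fun L _ b _ => hpair b
  fin_cases k <;> fin_cases i <;> simp [w, h2]

lemma solvable_of_star_of_vee (h2 : (2 : F) ≠ 0) (h𝓛 : ∀ L ∈ 𝓛, G.Transversal L)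
    (hstar : ∀ L ∈ 𝓛, ∀ i, G.Star i L → i = a) (hvee : ∀ L ∈ 𝓛, ∀ i, G.Vee i L → i = a) :
    G.Solvable F 𝓛 := by
  obtain ⟨b, hba, -⟩ := exists_ne_ne a a
  obtain ⟨c, hca, hcb⟩ := exists_ne_ne a b
  obtain ⟨w, hwa, hwb, hwc⟩ := exists_fun_eq hba.symm hca.symm hcb.symm
    (1 - 𝐞 a) (1 + 𝐞 a - 𝐞 b) (𝐞 a - 𝐞 b)
  have hpair : 1 ∈ Submodule.span F (w '' {a}ᶜ) := by
    rw [show 1 = w b - w c by rw [hwb, hwc]; abel]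
    exact Submodule.sub_mem _ (Submodule.subset_span ⟨b, hba, rfl⟩)
      (Submodule.subset_span ⟨c, hca, rfl⟩)
  refine solvable_of_weights (w := w) (fun k i => ?_) h𝓛
    (Submodule.span_mono (Set.image_subset_range _ _) hpair) (fun L hL i hi => ?_)
    fun L hL i hi => hvee L hL i hi ▸ hpair
  · rcases eq_or_eq_or_eq hba.symm hca.symm hcb.symm k with rfl | rfl | rfl <;>
      rcases eq_or_eq_or_eq hba.symm hca.symm hcb.symm i with rfl | rfl | rfl <;>
      simp [*, Ne.symm, one_add_one_eq_two]
  · obtain rfl := hstar L hL i hi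
    exact Submodule.mem_span_pair.2 ⟨1, 1, by simp [hwa]⟩

theorem solvable_of_no_conflict (h2 : (2 : F) ≠ 0) (h𝓛 : ∀ L ∈ 𝓛, G.Transversal L)
    (h : ∀ L ∈ 𝓛, ∀ L' ∈ 𝓛, ∀ a b, G.Star a L → G.Vee b L' → a = b) : G.Solvable F 𝓛 := by
  by_cases hvee : ∀ L ∈ 𝓛, ∀ b, ¬ G.Vee b L
  · exact solvable_of_forall_not_vee h2 h𝓛 hvee
  by_cases hstar : ∀ L ∈ 𝓛, ∀ a, ¬ G.Star a L
  · exact solvable_of_forall_not_star h2 h𝓛 hstar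
  push Not at hvee hstar
  obtain ⟨L, hL, a, ha⟩ := hstar
  obtain ⟨L', hL', b, hb⟩ := hvee
  obtain rfl := h L hL L' hL' a b ha hb
  exact solvable_of_star_of_vee h2 h𝓛 (fun L'' hL'' i hi => h L'' hL'' L' hL' i a hi hb)
    fun L'' hL'' i hi => (h L hL L'' hL'' a i ha hi).symm

lemma solvable_of_forall_inter_interior_nonempty (h𝓛 : ∀ L ∈ 𝓛, G.Transversal L)
    (h : ∀ L ∈ 𝓛, (L ∩ G.interior a).Nonempty) : G.Solvable F 𝓛 := by
  obtain ⟨b, hba, -⟩ := exists_ne_ne a a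
  obtain ⟨c, hca, hcb⟩ := exists_ne_ne a b
  obtain ⟨d, hd, hda, hdb, hdc⟩ := exists_isPiCode_of_ne (G := G) hba.symm hca.symm hcb.symm
    (isSideCode_const (w := 𝐞 b + 𝐞 c) (by simp [hba.symm, hca.symm]))
    (isSideCode_const (w := 𝐞 a) (by simp [hba])) (isSideCode_const (w := 𝐞 a) (by simp [hca]))
  refine ⟨d, hd, fun L hL => ?_⟩
  obtain ⟨v, hv, hva⟩ := h L hL
  have hbc : 𝐞 b + 𝐞 c ∈ Submodule.span F (d '' L) := hda v hva ▸ apply_mem_span hv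
  obtain ⟨u, hu, -, hua⟩ := (h𝓛 L hL).exists_mem_notMem_side a
  have hdu : d u = 𝐞 a := by
    rcases hua with rfl | ⟨l, hla, hl⟩
    · exact hd.1 a
    · obtain rfl | rfl : l = b ∨ l = c := by omega
      exacts [hdb u hl, hdc u hl]
  rw [Recovers, one_eq_add_add hba.symm hca.symm hcb.symm, add_assoc]
  exact Submodule.add_mem _ (hdu ▸ apply_mem_span hu) hbc

end ConstantCodes

section Conflict

variable {F : Type} [Field F] {L₁ L₂ L₃ : Set G.V} {P Q R Y Z : G.V} {a b c : Fin 3}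

local notation "𝐞" i:max => (Pi.single i (1 : F) : Fin 3 → F)

/-- Condition (C-IR) for the three sets in the role of `Λ_1`, `Λ_2`, `Λ_3`, with `S a`, `S c` in
the role of `S_1`, `S_3`. -/
def Obstructed (G : RegionGraph n) (a c : Fin 3) (L₁ L₂ L₃ : Set G.V) : Prop :=
  ∃ P ∈ G.interior a, ∃ Q ∈ G.interior c, L₁ = {G.S a, P} ∧ L₂ = {P, Q} ∧
    L₃ ⊆ G.reg {G.S a, Q} ∪ G.reg {G.S a, G.S c}

lemma solvable_of_source_mem (hab : a ≠ b) (hac : a ≠ c) (hbc : b ≠ c) (ha : G.S a ∈ L₁)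
    (hP : P ∈ L₁ ∩ G.interior a) (hR : R ∈ L₂ ∩ G.interior a) (hQ : Q ∈ L₂ ∩ G.interior c)
    (hL₃ : G.Transversal L₃) (hb : G.S b ∈ L₃) : G.Solvable F {L₁, L₂, L₃} := by
  obtain ⟨d, hd, hda, hdb, hdc⟩ := exists_isPiCode_of_ne (G := G) hab hac hbc
    (isSideCode_const (w := 𝐞 b + 𝐞 c) (by simp [hab, hac]))
    (isSideCode_const (w := 𝐞 a + 𝐞 c) (by simp [hab.symm, hbc]))
    (isSideCode_const (w := 𝐞 a) (by simp [hac.symm]))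
  refine ⟨d, hd, ?_⟩
  rintro _ (rfl | rfl | rfl) <;> rw [Recovers, one_eq_add_add hab hac hbc]
  · rw [add_assoc, ← hd.1 a, ← hda P hP.2]
    exact Submodule.add_mem _ (apply_mem_span ha) (apply_mem_span hP.1)
  · rw [add_assoc, ← hdc Q hQ.2, ← hda R hR.2]
    exact Submodule.add_mem _ (apply_mem_span hQ.1) (apply_mem_span hR.1)
  set W := Submodule.span F (d '' _)
  have hbW : 𝐞 b ∈ W := hd.1 b ▸ apply_mem_span hb
  suffices 𝐞 a + 𝐞 c ∈ W by
    rw [add_right_comm]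
    exact W.add_mem this hbW
  obtain ⟨u, hu, -, hua⟩ := hL₃.exists_mem_notMem_side a
  obtain ⟨v, hv, -, hvc⟩ := hL₃.exists_mem_notMem_side c
  have huW : d u ∈ W := apply_mem_span hu
  have hvW : d v ∈ W := apply_mem_span hv
  have haW : 𝐞 a ∈ W ∨ 𝐞 a + 𝐞 c ∈ W := by
    rcases hua with rfl | ⟨l, hla, hl⟩
    · exact Or.inl (hd.1 a ▸ huW)
    · obtain rfl | rfl : l = b ∨ l = c := by omega
      exacts [Or.inr (hdb u hl ▸ huW), Or.inl (hdc u hl ▸ huW)]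
  have hcW : 𝐞 c ∈ W ∨ 𝐞 a + 𝐞 c ∈ W := by
    rcases hvc with rfl | ⟨l, hlc, hl⟩
    · exact Or.inl (hd.1 c ▸ hvW)
    · obtain rfl | rfl : l = a ∨ l = b := by omega
      exacts [Or.inl ((W.add_mem_iff_right hbW).1 (hda v hl ▸ hvW)), Or.inr (hdb v hl ▸ hvW)]
  rcases haW with haW | h
  · exact hcW.elim (W.add_mem haW) id
  · exact h

lemma solvable_of_notMem_reg [Fintype F] (hcard : Fintype.card G.V ≤ Fintype.card F)
    (hab : a ≠ b) (hac : a ≠ c) (hbc : b ≠ c) (ha : G.S a ∈ L₁) (hP : P ∈ L₁ ∩ G.interior a)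
    (hR : R ∈ L₂ ∩ G.interior a) (hQ : Q ∈ L₂ ∩ G.interior c) (hY : Y ∈ L₃ ∩ G.interior c)
    (hYQ : Y ∉ G.reg {G.S a, Q}) (hZ : Z ∈ L₃) (hZb : Z = G.S c ∨ Z ∈ G.interior b) :
    G.Solvable F {L₁, L₂, L₃} := by
  classical
  obtain ⟨f, hf, hfa, hfY⟩ := exists_injective_eq_zero_eq hcard
    (u := G.S a) (v := Y) (fun h => hY.2.2 ⟨a, h⟩) (one_ne_zero (α := F))
  obtain ⟨d, hd, hda, hdb, hdc⟩ := exists_isPiCode_of_ne hab hac hbc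
    (isSideCode_const (w := 𝐞 b + 𝐞 c) (by simp [hab, hac]))
    (isSideCode_const (w := 𝐞 c) (by simp [hbc]))
    (isSideCode_slope_collapsed hab hac hbc hQ.2 hfa hf)
  have hdZ : d Z = 𝐞 c := by
    rcases hZb with rfl | hZb
    exacts [hd.1 c, hdb Z hZb]
  refine ⟨d, hd, ?_⟩
  rintro _ (rfl | rfl | rfl) <;> rw [Recovers, one_eq_add_add hab hac hbc]
  · rw [add_assoc, ← hd.1 a, ← hda P hP.2]
    exact Submodule.add_mem _ (apply_mem_span ha) (apply_mem_span hP.1)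
  · have hdQ : d Q = 𝐞 a := by
      rw [hdc Q hQ.2, if_pos (subset_reg (by simp)), zero_smul, add_zero]
    rw [add_assoc, ← hdQ, ← hda R hR.2]
    exact Submodule.add_mem _ (apply_mem_span hQ.1) (apply_mem_span hR.1)
  · have hdY : d Y = 𝐞 a + 𝐞 b := by rw [hdc Y hY.2, if_neg hYQ, hfY, one_smul]
    rw [← hdY, ← hdZ]
    exact Submodule.add_mem _ (apply_mem_span hY.1) (apply_mem_span hZ)

lemma recovers_of_slopes {d : G.V → Fin 3 → F} {κ μ : G.V → F} {L : Set G.V} (hab : a ≠ b)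
    (hac : a ≠ c) (hbc : b ≠ c) (hκ : κ.Injective) (hκb : κ (G.S b) = 0) (hμ : μ.Injective)
    (hda : ∀ v ∈ G.interior a, d v = 𝐞 b + κ v • 𝐞 c)
    (hdc : ∀ v ∈ G.interior c, d v = 𝐞 a + μ v • 𝐞 b) (hR : R ∈ L ∩ G.interior a)
    (hQ : Q ∈ L ∩ G.interior c)
    (h : (∃ R' ∈ L ∩ G.interior a, R' ≠ R) ∨ (∃ Q' ∈ L ∩ G.interior c, Q' ≠ Q) ∨
      κ R = -1 ∧ μ Q = 2) : G.Recovers d L := by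
  rw [Recovers, one_eq_add_add hab hac hbc]
  set W := Submodule.span F (d '' L)
  have hmemA : ∀ v ∈ L ∩ G.interior a, 𝐞 b + κ v • 𝐞 c ∈ W := fun v hv =>
    hda v hv.2 ▸ apply_mem_span hv.1
  have hmemC : ∀ v ∈ L ∩ G.interior c, 𝐞 a + μ v • 𝐞 b ∈ W := fun v hv =>
    hdc v hv.2 ▸ apply_mem_span hv.1
  rcases h with ⟨R', hR', hne⟩ | ⟨Q', hQ', hne⟩ | ⟨hκR, hμQ⟩
  · obtain ⟨hb, hc⟩ := mem_of_add_smul_mem (hκ.ne hne) (hmemA R' hR') (hmemA R hR)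
    have ha := (W.add_mem_iff_left (W.smul_mem _ hb)).1 (hmemC Q hQ)
    exact W.add_mem (W.add_mem ha hb) hc
  · obtain ⟨ha, hb⟩ := mem_of_add_smul_mem (hμ.ne hne) (hmemC Q' hQ') (hmemC Q hQ)
    have hκR : κ R ≠ 0 := hκb ▸ hκ.ne fun h => hR.2.2 ⟨b, h.symm⟩
    have hc := (W.smul_mem_iff hκR).1 ((W.add_mem_iff_right hb).1 (hmemA R hR))
    exact W.add_mem (W.add_mem ha hb) hc
  · have hsum : 𝐞 a + 𝐞 b + 𝐞 c = (𝐞 a + μ Q • 𝐞 b) - (𝐞 b + κ R • 𝐞 c) := by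
      rw [hκR, hμQ]
      module
    exact hsum ▸ W.sub_mem (hmemC Q hQ) (hmemA R hR)

lemma solvable_of_slopes {κ μ : G.V → F} (hab : a ≠ b) (hac : a ≠ c) (hbc : b ≠ c)
    (hκ : κ.Injective) (hκb : κ (G.S b) = 0) (hμ : μ.Injective) (hμa : μ (G.S a) = 0)
    (ha : G.S a ∈ L₁) (hP : P ∈ L₁ ∩ G.interior a) (hκP : κ P = 1)
    (hR : R ∈ L₂ ∩ G.interior a) (hQ : Q ∈ L₂ ∩ G.interior c)
    (h₂ : (∃ R' ∈ L₂ ∩ G.interior a, R' ≠ R) ∨ (∃ Q' ∈ L₂ ∩ G.interior c, Q' ≠ Q) ∨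
      κ R = -1 ∧ μ Q = 2)
    (hY : Y ∈ L₃ ∩ G.interior c) (hμY : μ Y = 1 ∨ G.S a ∈ L₃) (hZ : Z ∈ L₃)
    (hZb : Z = G.S c ∨ Z ∈ G.interior b) : G.Solvable F {L₁, L₂, L₃} := by
  obtain ⟨d, hd, hda, hdb, hdc⟩ := exists_isPiCode_of_ne hab hac hbc
    (isSideCode_slope_of_injective hbc hab.symm hac.symm hκb hκ)
    (isSideCode_const (w := 𝐞 c) (by simp [hbc]))
    (isSideCode_slope_of_injective hab hac hbc hμa hμ)
  refine ⟨d, hd, ?_⟩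
  rintro _ (rfl | rfl | rfl)
  · have hdP : d P = 𝐞 b + 𝐞 c := by rw [hda P hP.2, hκP, one_smul]
    rw [Recovers, one_eq_add_add hab hac hbc, add_assoc, ← hd.1 a, ← hdP]
    exact Submodule.add_mem _ (apply_mem_span ha) (apply_mem_span hP.1)
  · exact recovers_of_slopes hab hac hbc hκ hκb hμ hda hdc hR hQ h₂
  rw [Recovers, one_eq_add_add hab hac hbc]
  set W := Submodule.span F (d '' _)
  have hcW : 𝐞 c ∈ W := by
    rcases hZb with rfl | hZb
    exacts [hd.1 c ▸ apply_mem_span hZ, hdb Z hZb ▸ apply_mem_span hZ]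
  have hYW : 𝐞 a + μ Y • 𝐞 b ∈ W := hdc Y hY.2 ▸ apply_mem_span hY.1
  refine W.add_mem ?_ hcW
  rcases hμY with hμY | haL₃
  · simpa only [hμY, one_smul] using hYW
  · have haW : 𝐞 a ∈ W := hd.1 a ▸ apply_mem_span haL₃
    have hμY : μ Y ≠ 0 := hμa ▸ hμ.ne fun h => hY.2.2 ⟨a, h.symm⟩
    exact W.add_mem haW ((W.smul_mem_iff hμY).1 ((W.add_mem_iff_right haW).1 hYW))

lemma solvable_of_exists_ne [Fintype F] (hcard : Fintype.card G.V ≤ Fintype.card F)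
    (hab : a ≠ b) (hac : a ≠ c) (hbc : b ≠ c) (ha : G.S a ∈ L₁) (hP : P ∈ L₁ ∩ G.interior a)
    (hR : R ∈ L₂ ∩ G.interior a) (hQ : Q ∈ L₂ ∩ G.interior c)
    (h₂ : (∃ R' ∈ L₂ ∩ G.interior a, R' ≠ R) ∨ ∃ Q' ∈ L₂ ∩ G.interior c, Q' ≠ Q)
    (hY : Y ∈ L₃ ∩ G.interior c) (hZ : Z ∈ L₃) (hZb : Z = G.S c ∨ Z ∈ G.interior b) :
    G.Solvable F {L₁, L₂, L₃} := by
  obtain ⟨κ, hκ, hκb, hκP⟩ := exists_injective_eq_zero_eq hcard (u := G.S b) (v := P)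
    (fun h => hP.2.2 ⟨b, h⟩) (one_ne_zero (α := F))
  obtain ⟨μ, hμ, hμa, hμY⟩ := exists_injective_eq_zero_eq hcard (u := G.S a) (v := Y)
    (fun h => hY.2.2 ⟨a, h⟩) (one_ne_zero (α := F))
  exact solvable_of_slopes hab hac hbc hκ hκb hμ hμa ha hP hκP hR hQ (h₂.imp_right Or.inl) hY
    (Or.inl hμY) hZ hZb

lemma solvable_of_ne [Fintype F] (hcard : Fintype.card G.V ≤ Fintype.card F) (h2 : (2 : F) ≠ 0)
    (hab : a ≠ b) (hac : a ≠ c) (hbc : b ≠ c) (ha : G.S a ∈ L₁) (hP : P ∈ L₁ ∩ G.interior a)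
    (hR : R ∈ L₂ ∩ G.interior a) (hPR : P ≠ R) (hQ : Q ∈ L₂ ∩ G.interior c)
    (hY : Y ∈ L₃ ∩ G.interior c) (hYQ : Y ≠ Q ∨ G.S a ∈ L₃) (hZ : Z ∈ L₃)
    (hZb : Z = G.S c ∨ Z ∈ G.interior b) : G.Solvable F {L₁, L₂, L₃} := by
  have h11 : (1 : F) ≠ -1 := fun h => h2 (by linear_combination h)
  have h12 : (1 : F) ≠ 2 := by simp [← one_add_one_eq_two]
  obtain ⟨κ, hκ, hκb, hκP, hκR⟩ := exists_injective_eq_zero_eq_eq hcard (u := G.S b) (v := P)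
    (w := R) (fun h => hP.2.2 ⟨b, h⟩) (fun h => hR.2.2 ⟨b, h⟩) hPR one_ne_zero
    (neg_ne_zero.2 one_ne_zero) h11
  obtain ⟨μ, hμ, hμa, hμY, hμQ⟩ : ∃ μ : G.V → F, μ.Injective ∧ μ (G.S a) = 0 ∧
      (μ Y = 1 ∨ G.S a ∈ L₃) ∧ μ Q = 2 := by
    rcases hYQ with hYQ | haL₃
    · obtain ⟨μ, hμ, hμa, hμY, hμQ⟩ := exists_injective_eq_zero_eq_eq hcard
        (fun h => hY.2.2 ⟨a, h⟩) (fun h => hQ.2.2 ⟨a, h⟩) hYQ one_ne_zero h2 h12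
      exact ⟨μ, hμ, hμa, Or.inl hμY, hμQ⟩
    · obtain ⟨μ, hμ, hμa, hμQ⟩ := exists_injective_eq_zero_eq hcard
        (u := G.S a) (v := Q) (fun h => hQ.2.2 ⟨a, h⟩) h2
      exact ⟨μ, hμ, hμa, Or.inr haL₃, hμQ⟩
  exact solvable_of_slopes hab hac hbc hκ hκb hμ hμa ha hP hκP hR hQ
    (Or.inr (Or.inr ⟨hκR, hμQ⟩)) hY hμY hZ hZb

lemma solvable_of_ne_of_mem_interior [Fintype F] (hcard : Fintype.card G.V ≤ Fintype.card F)
    (h2 : (2 : F) ≠ 0) (hab : a ≠ b) (hac : a ≠ c) (hbc : b ≠ c) (ha : G.S a ∈ L₁)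
    (hP : P ∈ L₁ ∩ G.interior a) (hR : R ∈ L₂ ∩ G.interior a) (hPR : P ≠ R)
    (hQ : Q ∈ L₂ ∩ G.interior c) (hQ₃ : Q ∈ L₃) (hZ : Z ∈ L₃ ∩ G.interior b) :
    G.Solvable F {L₁, L₂, L₃} := by
  have h11 : (1 : F) ≠ -1 := fun h => h2 (by linear_combination h)
  obtain ⟨κ, hκ, hκb, hκP, hκR⟩ := exists_injective_eq_zero_eq_eq hcard (u := G.S b) (v := P)
    (w := R) (fun h => hP.2.2 ⟨b, h⟩) (fun h => hR.2.2 ⟨b, h⟩) hPR one_ne_zero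
    (neg_ne_zero.2 one_ne_zero) h11
  obtain ⟨d, hd, hda, hdb, hdc⟩ := exists_isPiCode_of_ne hab hac hbc
    (isSideCode_slope_of_injective hbc hab.symm hac.symm hκb hκ)
    (isSideCode_const (w := 𝐞 a + (2 : F) • 𝐞 c) (by simp [hab.symm, hbc]))
    (isSideCode_const (w := 𝐞 a + (2 : F) • 𝐞 b) (by simp [hac.symm, hbc.symm]))
  refine ⟨d, hd, ?_⟩
  rintro _ (rfl | rfl | rfl) <;> rw [Recovers, one_eq_add_add hab hac hbc]
  · have hdP : d P = 𝐞 b + 𝐞 c := by rw [hda P hP.2, hκP, one_smul]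
    rw [add_assoc, ← hd.1 a, ← hdP]
    exact Submodule.add_mem _ (apply_mem_span ha) (apply_mem_span hP.1)
  · have hsum : 𝐞 a + 𝐞 b + 𝐞 c = d Q - d R := by
      rw [hdc Q hQ.2, hda R hR.2, hκR]
      module
    exact hsum ▸ Submodule.sub_mem _ (apply_mem_span hQ.1) (apply_mem_span hR.1)
  · have hsum : (2 : F) • (𝐞 a + 𝐞 b + 𝐞 c) = d Q + d Z := by
      rw [hdc Q hQ.2, hdb Z hZ.2]
      module
    rw [← Submodule.smul_mem_iff _ h2, hsum]
    exact Submodule.add_mem _ (apply_mem_span hQ₃) (apply_mem_span hZ.1)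

lemma subset_side_union_interior (hab : a ≠ b) (hac : a ≠ c) (hbc : b ≠ c)
    (ha : G.S a ∈ L₁) (hP : P ∈ L₁ ∩ G.interior a) (hR : R ∈ L₂ ∩ G.interior a)
    (hQ : Q ∈ L₂ ∩ G.interior c) (hL₁ : G.Transversal L₁) (hL₂ : G.Transversal L₂)
    (hL₃ : G.Transversal L₃) (h : ¬ G.Solvable F {L₁, L₂, L₃}) :
    L₃ ⊆ G.side b ∪ G.interior c := by
  have hb : G.S b ∉ L₃ := mt (solvable_of_source_mem hab hac hbc ha hP hR hQ hL₃) h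
  have hLa : ¬ (L₃ ∩ G.interior a).Nonempty := by
    refine mt (fun hne => ?_) h
    refine solvable_of_forall_inter_interior_nonempty (a := a) ?_ ?_
    · rintro L (rfl | rfl | rfl)
      exacts [hL₁, hL₂, hL₃]
    · rintro L (rfl | rfl | rfl)
      exacts [⟨P, hP⟩, ⟨R, hR⟩, hne]
  intro v hv
  rcases mem_bigPi_iff_source_or_interior.1 (hL₃.1 hv) with ⟨i, rfl⟩ | ⟨k, hk⟩
  · exact Or.inl (source_mem_side.2 fun hib => hb (hib ▸ hv))
  rcases eq_or_eq_or_eq hab hac hbc k with rfl | rfl | rfl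
  exacts [(hLa ⟨v, hv, hk⟩).elim, Or.inl hk.1, Or.inr hk]

lemma subset_reg_union_reg [Fintype F] (hcard : Fintype.card G.V ≤ Fintype.card F)
    (hab : a ≠ b) (hac : a ≠ c) (hbc : b ≠ c) (ha : G.S a ∈ L₁) (hP : P ∈ L₁ ∩ G.interior a)
    (hR : R ∈ L₂ ∩ G.interior a) (hQ : Q ∈ L₂ ∩ G.interior c) (hZ : Z ∈ L₃)
    (hZb : Z = G.S c ∨ Z ∈ G.interior b) (hsub : L₃ ⊆ G.side b ∪ G.interior c)
    (h : ¬ G.Solvable F {L₁, L₂, L₃}) :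
    L₃ ⊆ G.reg {G.S a, Q} ∪ G.reg {G.S a, G.S c} := by
  intro v hv
  rcases hsub hv with hvb | hvc
  · rw [side_eq_regPair hac hab hbc.symm] at hvb
    exact Or.inr hvb
  · exact Or.inl (by_contra fun hvQ =>
      h (solvable_of_notMem_reg hcard hab hac hbc ha hP hR hQ ⟨hv, hvc⟩ hvQ hZ hZb))

lemma Vee.eq_pair (hL : G.Vee b L₂) (hab : a ≠ b) (hac : a ≠ c) (hbc : b ≠ c) (hR : R ∈ L₂)
    (hQ : Q ∈ L₂) (hRuniq : ∀ v ∈ L₂ ∩ G.interior a, v = R)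
    (hQuniq : ∀ v ∈ L₂ ∩ G.interior c, v = Q) : L₂ = {R, Q} := by
  refine Set.Subset.antisymm (fun v hv => ?_) (Set.pair_subset hR hQ)
  obtain ⟨k, hkb, hk⟩ := hL v hv
  obtain rfl | rfl : k = a ∨ k = c := by omega
  exacts [Or.inl (hRuniq v ⟨hv, hk⟩), Or.inr (hQuniq v ⟨hv, hk⟩)]

lemma eq_pair_of_not_solvable [Fintype F] (hcard : Fintype.card G.V ≤ Fintype.card F)
    (h2 : (2 : F) ≠ 0) (hab : a ≠ b) (hac : a ≠ c) (hbc : b ≠ c) (ha : G.S a ∈ L₁)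
    (hP : P ∈ L₁ ∩ G.interior a) (hR : R ∈ L₂ ∩ G.interior a) (hPR : P ≠ R)
    (hQ : Q ∈ L₂ ∩ G.interior c) (hY : Y ∈ L₃ ∩ G.interior c) (hZ : Z ∈ L₃)
    (hZb : Z = G.S c ∨ Z ∈ G.interior b) (hsub : L₃ ⊆ G.side b ∪ G.interior c)
    (h : ¬ G.Solvable F {L₁, L₂, L₃}) : L₃ = {G.S c, Q} := by
  have heq : ∀ Y ∈ L₃ ∩ G.interior c, Y = Q ∧ G.S a ∉ L₃ := fun Y hY => by
    have := mt (fun hYQ => solvable_of_ne hcard h2 hab hac hbc ha hP hR hPR hQ hY hYQ hZ hZb) h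
    rwa [not_or, not_not] at this
  obtain ⟨rfl, haL₃⟩ := heq Y hY
  have hbL₃ : ∀ v ∈ L₃, v ∉ G.interior b := fun v hv hvb =>
    h (solvable_of_ne_of_mem_interior hcard h2 hab hac hbc ha hP hR hPR hQ hY.1 ⟨hv, hvb⟩)
  obtain rfl := hZb.resolve_right (hbL₃ Z hZ)
  refine Set.Subset.antisymm (fun v hv => ?_) (Set.pair_subset hZ hY.1)
  rcases hsub hv with hvb | hvc
  · obtain ⟨i, hib, rfl⟩ := (mem_side_iff.1 hvb).resolve_right (hbL₃ v hv)
    obtain rfl | rfl : i = a ∨ i = c := by omega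
    exacts [(haL₃ hv).elim, Or.inl rfl]
  · exact Or.inr (heq v ⟨hv, hvc⟩).1

theorem obstructed_of_not_solvable [Fintype F] (hcard : Fintype.card G.V ≤ Fintype.card F)
    (h2 : (2 : F) ≠ 0) (hab : a ≠ b) (hac : a ≠ c) (hbc : b ≠ c) (hstar : G.Star a L₁)
    (hvee : G.Vee b L₂) (hL₁ : G.Transversal L₁) (hL₂ : G.Transversal L₂)
    (hL₃ : G.Transversal L₃) (h : ¬ G.Solvable F {L₁, L₂, L₃}) :
    G.Obstructed a c L₁ L₂ L₃ ∨ G.Obstructed c a L₃ L₂ L₁ := by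
  have ha := hstar.1
  obtain ⟨P₀, hP₀⟩ := hL₁.inter_interior_nonempty_of_star hstar
  obtain ⟨R, hR⟩ := hL₂.inter_interior_nonempty_of_vee hvee hab
  obtain ⟨Q, hQ⟩ := hL₂.inter_interior_nonempty_of_vee hvee hbc.symm
  have hsub := subset_side_union_interior hab hac hbc ha hP₀ hR hQ hL₁ hL₂ hL₃ h
  obtain ⟨Y, hY⟩ := hL₃.inter_interior_nonempty_of_subset hsub
  obtain ⟨Z, hZ, hZb⟩ := hL₃.exists_source_or_mem_interior hsub
  have huniq := mt (fun h₂ => solvable_of_exists_ne hcard hab hac hbc ha hP₀ hR hQ h₂ hY hZ hZb) h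
  push Not at huniq
  have hL₂RQ := hvee.eq_pair hab hac hbc hR.1 hQ.1 huniq.1 huniq.2
  by_cases hP : ∃ P ∈ L₁ ∩ G.interior a, P ≠ R
  · obtain ⟨P, hP, hPR⟩ := hP
    have hL₃Q := eq_pair_of_not_solvable hcard h2 hab hac hbc ha hP hR hPR hQ hY hZ hZb hsub h
    have hsub' : L₁ ⊆ G.side b ∪ G.interior a :=
      hstar.2.trans (Set.insert_subset (Or.inl (source_mem_side.2 hab)) Set.subset_union_right)
    have hSc : G.S c ∈ L₃ := by simp [hL₃Q]
    have hQ₃ : Q ∈ L₃ ∩ G.interior c := ⟨by simp [hL₃Q], hQ.2⟩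
    rw [Set.insert_comm, Set.pair_comm L₁, Set.insert_comm] at h
    exact Or.inr ⟨Q, hQ.2, R, hR.2, hL₃Q, hL₂RQ.trans (Set.pair_comm R Q),
      subset_reg_union_reg hcard hbc.symm hac.symm hab.symm hSc hQ₃ hQ hR ha (Or.inl rfl) hsub' h⟩
  · push Not at hP
    have hRL₁ : R ∈ L₁ := hP P₀ hP₀ ▸ hP₀.1
    have hL₁R : L₁ = {G.S a, R} := Set.Subset.antisymm
      (fun v hv => (hstar.2 hv).imp_right fun hva => hP v ⟨hv, hva⟩) (Set.pair_subset ha hRL₁)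
    exact Or.inl ⟨R, hR.2, Q, hQ.2, hL₁R, hL₂RQ,
      subset_reg_union_reg hcard hab hac hbc ha hP₀ hR hQ hZ hZb hsub h⟩

end Conflict

section Feasibility

variable {F : Type} [Field F] {L L' : Set G.V}

lemma solvable_pair (h2 : (2 : F) ≠ 0) (hL : G.Transversal L) (hL' : G.Transversal L') :
    G.Solvable F {L, L'} := by
  have h𝓛 : ∀ M ∈ ({L, L'} : Set (Set G.V)), G.Transversal M := by
    rintro M (rfl | rfl)
    exacts [hL, hL']
  by_contra hns
  have hconf := mt (solvable_of_no_conflict h2 h𝓛) hns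
  push Not at hconf
  obtain ⟨M, hM, M', hM', a, b, hstar, hvee, hab⟩ := hconf
  have hMa := (h𝓛 M hM).inter_interior_nonempty_of_star hstar
  have hMa' := (h𝓛 M' hM').inter_interior_nonempty_of_vee hvee hab
  have hne : M ≠ M' := fun h => hvee.source_notMem (h ▸ hstar.1)
  refine hns (solvable_of_forall_inter_interior_nonempty (a := a) h𝓛 ?_)
  rintro N (rfl | rfl) <;> rcases hM with rfl | rfl <;> rcases hM' with rfl | rfl <;>
    first | assumption | exact (hne rfl).elim

lemma terminalSeparable_iff : G.TerminalSeparable ↔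
    ∀ v ∉ G.bigPi, ∀ i j, G.Reaches v (G.T i) → G.Reaches v (G.T j) → i = j := by
  constructor
  · intro h v hv i j hi hj
    by_contra hij
    have hcard : 1 < {l | G.Reaches v (G.T l)}.ncard :=
      (Set.one_lt_ncard_iff (Set.toFinite _)).2 ⟨i, j, hi, hj, hij⟩
    exact Set.eq_empty_iff_forall_notMem.1 (h _ hcard) v ⟨hv, fun _ => Iff.rfl⟩
  · intro h I hI
    obtain ⟨i, j, hi, hj, hij⟩ := (Set.one_lt_ncard_iff (Set.toFinite _)).1 hI
    exact Set.eq_empty_of_forall_notMem fun v hv =>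
      hij (h v hv.1 i j ((hv.2 i).1 hi) ((hv.2 j).1 hj))

lemma TerminalSeparable.boundary_eq_lambda (h : G.TerminalSeparable) (j : Fin n) :
    G.boundary G.bigPi (G.T j) = G.Lambda {j} := by
  have homega : ∀ R, R ∈ G.Omega {j} ↔ R ∉ G.bigPi ∧ G.Reaches R (G.T j) := fun R =>
    ⟨fun hR => ⟨hR.1, (hR.2 j).1 rfl⟩, fun hR => ⟨hR.1, fun i =>
      ⟨fun hi => hi ▸ hR.2, fun hi => terminalSeparable_iff.1 h R hR.1 i j hi hR.2⟩⟩⟩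
  simp only [boundary, Lambda, homega]

lemma solvable_range [Fintype F] (hcard : Fintype.card G.V ≤ Fintype.card F) (h2 : (2 : F) ≠ 0)
    {L : Fin 3 → Set G.V} (hL : ∀ j, G.Transversal (L j))
    (hobs : ∀ a c, a ≠ c → ∀ τ : Equiv.Perm (Fin 3),
      ¬ G.Obstructed a c (L (τ 0)) (L (τ 1)) (L (τ 2))) : G.Solvable F (Set.range L) := by
  by_contra hns
  have hconf := mt (solvable_of_no_conflict h2 (Set.forall_mem_range.2 hL)) hns
  push Not at hconf
  obtain ⟨_, ⟨j₁, rfl⟩, _, ⟨j₂, rfl⟩, a, b, hstar, hvee, hab⟩ := hconf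
  obtain ⟨c, hca, hcb⟩ := exists_ne_ne a b
  obtain ⟨j₃, hj₃₁, hj₃₂⟩ := exists_ne_ne j₁ j₂
  have hj₁₂ : j₁ ≠ j₂ := fun h => hvee.source_notMem (h ▸ hstar.1)
  have hrange : Set.range L ⊆ {L j₁, L j₂, L j₃} := by
    rintro _ ⟨j, rfl⟩
    rcases eq_or_eq_or_eq hj₁₂ hj₃₁.symm hj₃₂.symm j with rfl | rfl | rfl <;> simp
  rcases obstructed_of_not_solvable hcard h2 hab hca.symm hcb.symm hstar hvee (hL j₁) (hL j₂)
    (hL j₃) (mt (Solvable.mono · hrange) hns) with h | h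
  · obtain ⟨τ, rfl, rfl, rfl⟩ := exists_perm_eq hj₁₂ hj₃₁.symm hj₃₂.symm
    exact hobs a c hca.symm τ h
  · obtain ⟨τ, rfl, rfl, rfl⟩ := exists_perm_eq hj₃₂ hj₃₁ hj₁₂.symm
    exact hobs c a hca τ h

lemma cir_iff {G : RegionGraph 3} : G.CIR ↔ ∃ a c, a ≠ c ∧ ∃ τ : Equiv.Perm (Fin 3),
    G.Obstructed a c (G.Lambda {τ 0}) (G.Lambda {τ 1}) (G.Lambda {τ 2}) := by
  constructor
  · rintro ⟨σ, τ, P, Q, hP, hQ, h⟩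
    have h₀₁ : σ 0 ≠ σ 1 := σ.injective.ne (by decide)
    have h₀₂ : σ 0 ≠ σ 2 := σ.injective.ne (by decide)
    have h₁₂ : σ 1 ≠ σ 2 := σ.injective.ne (by decide)
    rw [← interior_eq_regO h₁₂ h₀₁.symm h₀₂.symm] at hP
    rw [← interior_eq_regO h₀₁ h₀₂ h₁₂] at hQ
    exact ⟨σ 0, σ 2, h₀₂, τ, P, hP, Q, hQ, h⟩
  · rintro ⟨a, c, hac, τ, P, hP, Q, hQ, h⟩
    obtain ⟨b, hba, hbc⟩ := exists_ne_ne a c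
    obtain ⟨σ, rfl, rfl, rfl⟩ := exists_perm_eq hba.symm hac hbc
    rw [interior_eq_regO hbc hba hac.symm] at hP
    rw [interior_eq_regO hba.symm hac hbc] at hQ
    exact ⟨σ, τ, P, Q, hP, hQ, h⟩

theorem feasible_of_not_cir {G : RegionGraph 3} (hA : G.Assumption1) (hsep : G.TerminalSeparable)
    (hC : ¬ G.CIR) : G.Feasible := by
  obtain ⟨F, _, _, hcard, h2⟩ := exists_finite_field (Fintype.card G.V)
  have hsolv : G.Solvable F (G.boundary G.bigPi '' Set.range G.T) := by
    rw [← Set.range_comp]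
    refine solvable_range hcard h2 (fun j => transversal_boundary (hA j)) fun a c hac τ h => hC ?_
    simp only [Function.comp_apply, hsep.boundary_eq_lambda] at h
    exact cir_iff.2 ⟨a, c, hac, τ, h⟩
  refine feasible_of_roots (A := Set.range G.T) ?_ ?_ (fun j => ⟨_, ⟨j, rfl⟩, .refl⟩)
    hsolv
  · rw [Set.disjoint_left]
    rintro _ ⟨j, rfl⟩
    exact hA j
  · rintro v hv _ ⟨i, rfl⟩ _ ⟨j, rfl⟩ hi hj
    rw [terminalSeparable_iff.1 hsep v hv i j hi hj]

lemma exists_minimal_of_not_terminalSeparable (h : ¬ G.TerminalSeparable) :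
    ∃ R ∉ G.bigPi, (∃ i j, i ≠ j ∧ G.Reaches R (G.T i) ∧ G.Reaches R (G.T j)) ∧
      ∀ v ∉ G.bigPi, G.Reaches v R → v = R := by
  let U : Set G.V := {v | v ∉ G.bigPi → ∀ i j, G.Reaches v (G.T i) → G.Reaches v (G.T j) → i = j}
  have hU : ∃ r, r ∉ U := by
    by_contra! hU
    exact h (terminalSeparable_iff.2 hU)
  obtain ⟨r, hr⟩ := hU
  obtain ⟨R, hRU, -, hpar⟩ := exists_minimal_notMem hr
  simp only [U, Set.mem_ofPred_eq, not_forall] at hRU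
  obtain ⟨hR, i, j, hi, hj, hij⟩ := hRU
  refine ⟨R, hR, ⟨i, j, hij, hi, hj⟩, fun v hv hvR => ?_⟩
  rcases Relation.ReflTransGen.cases_tail hvR with h | ⟨p, hvp, hp⟩
  · exact h.symm
  · have hpPi : p ∉ G.bigPi := fun hpPi => hv (G.isAncestral_bigPi.mem_of_reaches hvp hpPi)
    exact (hij (hpar hp hpPi i j (hi.head hp) (hj.head hp))).elim

theorem feasible_of_not_terminalSeparable {G : RegionGraph 3} (hA : G.Assumption1)
    (hsep : ¬ G.TerminalSeparable) : G.Feasible := by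
  obtain ⟨F, _, _, -, h2⟩ := exists_finite_field 0
  obtain ⟨R, hR, ⟨i, j, hij, hi, hj⟩, hmin⟩ := exists_minimal_of_not_terminalSeparable hsep
  obtain ⟨k, hki, hkj⟩ := exists_ne_ne i j
  let A : Set G.V := insert R {r | r = G.T k ∧ ¬ G.Reaches R r}
  have hA_or : ∀ r ∈ A, r = R ∨ r = G.T k := by
    rintro r (rfl | hr)
    exacts [Or.inl rfl, Or.inr hr.1]
  have hreaches : ∀ v ∉ G.bigPi, G.Reaches v R → ∀ s ∈ A, G.Reaches v s → s = R := by
    rintro v hv hvR s (rfl | ⟨-, hRs⟩) hvs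
    · rfl
    · obtain rfl := hmin v hv hvR
      exact (hRs hvs).elim
  refine feasible_of_roots (A := A) ?_ ?_ ?_ ((solvable_pair (F := F) h2 (transversal_boundary hR)
    (transversal_boundary (hA k))).mono ?_)
  · rw [Set.disjoint_left]
    intro r hr
    rcases hA_or r hr with rfl | rfl
    exacts [hR, hA k]
  · intro v hv r hr s hs hvr hvs
    rcases hA_or r hr with rfl | rfl
    · exact (hreaches v hv hvr s hs hvs).symm
    rcases hA_or s hs with rfl | rfl
    exacts [hreaches v hv hvs _ hr hvr, rfl]
  · intro l
    by_cases hl : G.Reaches R (G.T l)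
    · exact ⟨R, Or.inl rfl, hl⟩
    · obtain rfl | rfl | rfl : l = i ∨ l = j ∨ l = k := by omega
      exacts [(hl hi).elim, (hl hj).elim, ⟨_, Or.inr ⟨rfl, hl⟩, .refl⟩]
  · rintro _ ⟨r, hr, rfl⟩
    exact (hA_or r hr).imp (congrArg _) (congrArg _)

end Feasibility

section Infeasibility

variable {F : Type} [Field F] {d : G.V → Fin 3 → F} {L₁ L₂ L₃ : Set G.V} {a b c k : Fin 3}
  {v P Q : G.V}

lemma IsLinearCode.apply_source (hd : G.IsLinearCode F d) {i : Fin 3} (hik : i ≠ k) :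
    d (G.S i) k = 0 := by
  rw [hd.1, Pi.single_eq_of_ne hik.symm]

lemma IsLinearCode.apply_eq_zero_of_mem_side (hd : G.IsLinearCode F d) (hv : v ∈ G.side k) :
    d v k = 0 := by
  refine hd.apply_eq_zero_of_mem_reg ?_ hv
  rintro _ ⟨i, hi, rfl⟩
  exact hd.apply_source hi

lemma Recovers.exists_pair (h : G.Recovers d {P, Q}) :
    ∃ x y : F, ∀ i, x * d P i + y * d Q i = 1 := by
  rw [Recovers, Set.image_pair] at h
  obtain ⟨x, y, hxy⟩ := Submodule.mem_span_pair.1 h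
  exact ⟨x, y, congrFun hxy⟩

lemma IsLinearCode.apply_eq_of_recovers_pair (hd : G.IsLinearCode F d) (hab : a ≠ b) (hac : a ≠ c)
    (h : G.Recovers d {G.S a, P}) : d P b = d P c := by
  obtain ⟨x, y, hxy⟩ := h.exists_pair
  have hb : y * d P b = 1 := by simpa [hd.apply_source hab] using hxy b
  have hc : y * d P c = 1 := by simpa [hd.apply_source hac] using hxy c
  exact mul_left_cancel₀ (left_ne_zero_of_mul_eq_one hb) (hb.trans hc.symm)

lemma apply_eq_zero_of_recovers_pair (hPa : d P a = 0) (hPbc : d P b = d P c) (hQc : d Q c = 0)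
    (h : G.Recovers d {P, Q}) : d Q b = 0 := by
  obtain ⟨x, y, hxy⟩ := h.exists_pair
  have ha : y * d Q a = 1 := by simpa [hPa] using hxy a
  have hb : x * d P b + y * d Q b = 1 := hxy b
  have hc : x * d P c = 1 := by simpa [hQc] using hxy c
  rw [hPbc, hc, add_eq_left] at hb
  exact (mul_eq_zero.1 hb).resolve_left (left_ne_zero_of_mul_eq_one ha)

theorem IsLinearCode.not_recovers_of_obstructed (hd : G.IsLinearCode F d) (hac : a ≠ c)
    (h : G.Obstructed a c L₁ L₂ L₃) (h₁ : G.Recovers d L₁) (h₂ : G.Recovers d L₂) :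
    ¬ G.Recovers d L₃ := by
  obtain ⟨P, hP, Q, hQ, rfl, rfl, hL₃⟩ := h
  obtain ⟨b, hba, hbc⟩ := exists_ne_ne a c
  have hPbc : d P b = d P c := hd.apply_eq_of_recovers_pair hba.symm hac h₁
  have hQb : d Q b = 0 := apply_eq_zero_of_recovers_pair (hd.apply_eq_zero_of_mem_side hP.1) hPbc
    (hd.apply_eq_zero_of_mem_side hQ.1) h₂
  have hL₃b : ∀ v ∈ L₃, d v b = 0 := by
    intro v hv
    rcases hL₃ hv with hv | hv <;> refine hd.apply_eq_zero_of_mem_reg ?_ hv <;>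
      rintro _ (rfl | rfl)
    exacts [hd.apply_source hba.symm, hQb, hd.apply_source hba.symm, hd.apply_source hbc.symm]
  exact fun h₃ => one_ne_zero (apply_eq_zero_of_mem_span hL₃b h₃)

theorem TerminalSeparable.recovers_lambda (hsep : G.TerminalSeparable) (hA : G.Assumption1)
    (hd : G.IsLinearSolution F d) (j : Fin n) : G.Recovers d (G.Lambda {j}) := by
  have hcoded : ∀ w ∉ G.bigPi, G.Reaches w (G.T j) → G.IsCodedAt d w := by
    rintro w hw -
    refine hd.1.isCodedAt ?_
    rintro ⟨i, rfl⟩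
    exact hw (source_mem_bigPi i)
  have hTj := mem_span_boundary hcoded (hA j) .refl
  rwa [hsep.boundary_eq_lambda, hd.2 j] at hTj

theorem not_feasible_of_cir {G : RegionGraph 3} (hA : G.Assumption1) (hsep : G.TerminalSeparable)
    (hC : G.CIR) : ¬ G.Feasible := by
  rintro ⟨F, _, _, d, hd⟩
  obtain ⟨a, c, hac, τ, h⟩ := cir_iff.1 hC
  exact hd.1.not_recovers_of_obstructed hac h (hsep.recovers_lambda hA hd _)
    (hsep.recovers_lambda hA hd _) (hsep.recovers_lambda hA hd _)

end Infeasibility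

end RegionGraph

/-- A region graph with exactly three terminals (satisfying Assumption 1) is
infeasible iff it is terminal-separable and condition (C-IR) holds. -/
theorem three_terminal_infeasibility (G : RegionGraph 3)
    (hA : G.Assumption1) :
    ¬ G.Feasible ↔ G.TerminalSeparable ∧ G.CIR := by
  refine ⟨fun hF => ?_, fun ⟨hsep, hC⟩ => RegionGraph.not_feasible_of_cir hA hsep hC⟩
  have hsep : G.TerminalSeparable := by
    by_contra hsep
    exact hF (RegionGraph.feasible_of_not_terminalSeparable hA hsep)
  exact ⟨hsep, by_contra fun hC => hF (RegionGraph.feasible_of_not_cir hA hsep hC)⟩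

end SumNetworksPaper
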